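/- The sequence r(n) = (p(n)/n)^{1/n} is strictly log-convex for n ≥ 61; that is, for every integer n ≥ 61, r(n)² < r(n-1)·r(n+1). -/

import Mathlib

open Real

/-- The partition function, as a real number. -/
noncomputable def p (n : ℕ) : ℝ := (Fintype.card (Nat.Partition n) : ℝ)

/-- `r n = (p n / n)^(1/n)`. -/
noncomputable def r (n : ℕ) : ℝ := (p n / (n : ℝ)) ^ ((1 : ℝ) / (n : ℝ))

section PowerSeries

open PowerSeries PowerSeries.WithPiTopology

theorem geometric_mul_one_sub_X_pow (i : ℕ) :
    (PowerSeries.mk fun n => if i + 1 ∣ n then (1 : ℤ) else 0) * (1 - (X : ℤ⟦X⟧) ^ (i + 1)) = 1 := by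
  ext n
  rw [mul_sub, mul_one, map_sub, coeff_mk, coeff_mul_X_pow', coeff_one]
  rcases Nat.lt_or_ge n (i + 1) with hn | hn
  · rcases Nat.eq_zero_or_pos n with rfl | h0
    · simp
    · simp [Nat.not_le.2 hn, Nat.not_dvd_of_pos_of_lt h0 hn, h0.ne']
  · obtain ⟨m, rfl⟩ := Nat.exists_eq_add_of_le hn
    simp [coeff_mk]

/-- The generating function of the partition numbers as a product of geometric series. -/
theorem hasProd_partition_series :
    HasProd (fun i : ℕ => (PowerSeries.mk fun n => if i + 1 ∣ n then (1 : ℤ) else 0))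
      (PowerSeries.mk fun n => (Fintype.card (Nat.Partition n) : ℤ)) := by
  have h0 := Nat.Partition.hasProd_powerSeriesMk_card_restricted ℤ (fun _ => True)
  have h1 : (fun i : ℕ => (PowerSeries.mk fun n => if i + 1 ∣ n then (1 : ℤ) else 0)) =
      fun i => if True then ∑' j : ℕ, (X : ℤ⟦X⟧) ^ ((i + 1) * j) else 1 := by
    funext i
    rw [if_pos trivial]
    have h := tsum_pow_mul_one_sub_of_constantCoeff_eq_zero (f := (X : ℤ⟦X⟧) ^ (i + 1)) (by simp)
    have h2 := geometric_mul_one_sub_X_pow i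
    simp_rw [pow_mul]
    have h3 : (1 - (X : ℤ⟦X⟧) ^ (i + 1)) ≠ 0 := by
      intro h0
      rw [h0, mul_zero] at h2
      exact zero_ne_one h2
    exact mul_right_cancel₀ h3 (h2.trans h.symm)
  have h2 : (PowerSeries.mk fun n => (Fintype.card (Nat.Partition n) : ℤ)) =
      PowerSeries.mk fun n => ((Nat.Partition.restricted n fun _ => True).card : ℤ) := by
    ext n
    simp [Nat.Partition.restricted, Finset.card_univ]
  rw [h1, h2]
  exact h0

theorem partition_series_mul_pentagonalSeries :
    (PowerSeries.mk fun n => (Fintype.card (Nat.Partition n) : ℤ)) * pentagonalSeries ℤ = 1 := by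
  refine (hasProd_partition_series.mul (hasProd_one_sub_X_pow ℤ)).unique ?_
  simp_rw [geometric_mul_one_sub_X_pow]
  exact hasProd_one

/-- The coefficients of the pentagonal series below degree `3 * m ^ 2 / 2` are given by the first
`m` pairs of terms. -/
theorem coeff_pentagonalSeries_eq_sum {d m : ℕ} (hd : 2 * d + 1 < m * (3 * m + 1)) :
    coeff d (pentagonalSeries ℤ) = ∑ k ∈ Finset.range m, coeff d ((-1 : ℤ⟦X⟧) ^ k *
      (X ^ (k * (3 * k + 1) / 2) - X ^ ((k + 1) * (3 * k + 2) / 2))) := by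
  have hexp (k : ℕ) : pentagonal (-k) = k * (3 * k + 1) / 2 ∧
      pentagonal (k + 1) = (k + 1) * (3 * k + 2) / 2 := by
    constructor
    · have h := two_mul_natCast_pentagonal_neg k
      have : 2 * pentagonal (-k) = k * (3 * k + 1) := by exact_mod_cast h
      omega
    · have h := two_mul_natCast_pentagonal (k + 1)
      have : 2 * pentagonal (k + 1) = (k + 1) * (3 * k + 2) := by
        zify; rw [h]; ring
      omega
  have h := hasSum_pow_pentagonal_sub_pentagonalSeries ℤ
  simp_rw [(hexp _).1, (hexp _).2] at h
  have h' := h.map (coeff (R := ℤ) d) (continuous_coeff ℤ d)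
  refine h'.unique ?_
  refine hasSum_sum_of_ne_finset_zero fun k hk => ?_
  have hk : m ≤ k := by simpa using hk
  have h1 : m * (3 * m + 1) ≤ k * (3 * k + 1) := by gcongr
  have h2 : k * (3 * k + 1) ≤ (k + 1) * (3 * k + 2) := by nlinarith
  have hpow (j : ℕ) (hj : d ≠ j) (k : ℕ) : coeff d ((-1 : ℤ⟦X⟧) ^ k * X ^ j) = 0 := by
    rcases neg_one_pow_eq_or ℤ⟦X⟧ k with h | h <;> simp [h, coeff_X_pow, hj]
  rw [Function.comp_apply, mul_sub, map_sub, hpow _ (by omega), hpow _ (by omega), sub_zero]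

end PowerSeries

/-- The terms with positive sign of Euler's pentagonal series at `2 ^ b`. -/
def pentPos (b m : ℕ) : ℕ :=
  Nat.rec 0 (fun j acc => acc +
    (2 ^ (b * (j * (6 * j + 1))) + 2 ^ (b * ((j + 1) * (6 * j + 5))))) m

/-- The terms with negative sign of Euler's pentagonal series at `2 ^ b`. -/
def pentNeg (b m : ℕ) : ℕ :=
  Nat.rec 0 (fun j acc => acc +
    (2 ^ (b * ((2 * j + 1) * (3 * j + 1))) + 2 ^ (b * ((2 * j + 1) * (3 * j + 2))))) m

theorem pentPos_sub_pentNeg (b m : ℕ) :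
    (pentPos b m : ℤ) - pentNeg b m = ∑ k ∈ Finset.range (2 * m), (-1) ^ k *
      (((2 : ℤ) ^ b) ^ (k * (3 * k + 1) / 2) - ((2 : ℤ) ^ b) ^ ((k + 1) * (3 * k + 2) / 2)) := by
  induction m with
  | zero => rfl
  | succ m ih =>
    have hp : pentPos b (m + 1) = pentPos b m +
      (2 ^ (b * (m * (6 * m + 1))) + 2 ^ (b * ((m + 1) * (6 * m + 5)))) := rfl
    have hn : pentNeg b (m + 1) = pentNeg b m +
      (2 ^ (b * ((2 * m + 1) * (3 * m + 1))) + 2 ^ (b * ((2 * m + 1) * (3 * m + 2)))) := rfl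
    have e1 : 2 * m * (3 * (2 * m) + 1) / 2 = m * (6 * m + 1) := by
      rw [mul_assoc, Nat.mul_div_cancel_left _ two_pos]; ring
    have e2 : (2 * m + 1) * (3 * (2 * m) + 2) / 2 = (2 * m + 1) * (3 * m + 1) := by
      rw [show (2 * m + 1) * (3 * (2 * m) + 2) = 2 * ((2 * m + 1) * (3 * m + 1)) by ring,
        Nat.mul_div_cancel_left _ two_pos]
    have e3 : (2 * m + 1) * (3 * (2 * m + 1) + 1) / 2 = (2 * m + 1) * (3 * m + 2) := by
      rw [show (2 * m + 1) * (3 * (2 * m + 1) + 1) = 2 * ((2 * m + 1) * (3 * m + 2)) by ring,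
        Nat.mul_div_cancel_left _ two_pos]
    have e4 : (2 * m + 1 + 1) * (3 * (2 * m + 1) + 2) / 2 = (m + 1) * (6 * m + 5) := by
      rw [show (2 * m + 1 + 1) * (3 * (2 * m + 1) + 2) = 2 * ((m + 1) * (6 * m + 5)) by ring,
        Nat.mul_div_cancel_left _ two_pos]
    rw [show 2 * (m + 1) = 2 * m + 1 + 1 by ring, Finset.sum_range_succ, Finset.sum_range_succ,
      ← ih, e1, e2, e3, e4, hp, hn]
    have h1 : (-1 : ℤ) ^ (2 * m) = 1 := by simp
    rw [pow_succ, h1]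
    push_cast
    simp only [pow_mul]
    ring

section Truncation

open PowerSeries

/-- Euler's identity for the truncated partition generating function, evaluated at `2 ^ b`. -/
theorem dvd_sum_partition_mul_pent (b m N : ℕ) (hN : 2 * N < 2 * m * (6 * m + 1)) :
    ((2 : ℤ) ^ b) ^ N ∣ (∑ i ∈ Finset.range N, (Fintype.card (Nat.Partition i) : ℤ) *
      ((2 : ℤ) ^ b) ^ i) * ((pentPos b m : ℤ) - pentNeg b m) - 1 := by
  set Q : Polynomial ℤ := trunc N (PowerSeries.mk fun n => (Fintype.card (Nat.Partition n) : ℤ))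
    with hQ
  set E : Polynomial ℤ := ∑ k ∈ Finset.range (2 * m), (-1) ^ k *
      (Polynomial.X ^ (k * (3 * k + 1) / 2) - Polynomial.X ^ ((k + 1) * (3 * k + 2) / 2)) with hE
  have hEcoeff : ∀ d < N, E.coeff d = coeff d (pentagonalSeries ℤ) := by
    intro d hd
    rw [coeff_pentagonalSeries_eq_sum (m := 2 * m) (by nlinarith), ← Polynomial.coeff_coe, hE,
      ← Polynomial.coeToPowerSeries.ringHom_apply, map_sum, map_sum]
    refine Finset.sum_congr rfl fun k _ => ?_
    simp
  have hdvd : (Polynomial.X : Polynomial ℤ) ^ N ∣ Q * E - 1 := by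
    rw [Polynomial.X_pow_dvd_iff]
    intro d hd
    have h := congrArg (coeff d) partition_series_mul_pentagonalSeries
    rw [PowerSeries.coeff_mul, PowerSeries.coeff_one] at h
    rw [Polynomial.coeff_sub, Polynomial.coeff_mul, Polynomial.coeff_one, sub_eq_zero]
    refine Eq.trans (Finset.sum_congr rfl fun x hx => ?_) h
    have hx := Finset.HasAntidiagonal.mem_antidiagonal.1 hx
    rw [hEcoeff _ (by omega), hQ, coeff_trunc, if_pos (by omega)]
  have h := map_dvd (Polynomial.evalRingHom ((2 : ℤ) ^ b)) hdvd
  simp only [map_sub, map_mul, map_one, map_pow, Polynomial.coe_evalRingHom, Polynomial.eval_X] at h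
  have hQe : Q.eval ((2 : ℤ) ^ b) = ∑ i ∈ Finset.range N, (Fintype.card (Nat.Partition i) : ℤ) *
      ((2 : ℤ) ^ b) ^ i := by
    have h := eval₂_trunc_eq_sum_range ((2 : ℤ) ^ b) (RingHom.id ℤ) N
      (PowerSeries.mk fun n => (Fintype.card (Nat.Partition n) : ℤ))
    simpa [Polynomial.eval₂_id] using h
  have hEe : E.eval ((2 : ℤ) ^ b) = (pentPos b m : ℤ) - pentNeg b m := by
    rw [pentPos_sub_pentNeg, hE, Polynomial.eval_finsetSum]
    simp
  rwa [hQe, hEe] at h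

end Truncation

theorem p_pos (n : ℕ) : 0 < p n := by
  unfold p
  exact_mod_cast Fintype.card_pos

/-- Convexity of `log (r n)` expressed through the logarithms of `p n / n` and of its successive
ratios. -/
theorem sq_r_lt_of_log_lt {n : ℕ} (hn : 2 ≤ n) {a b c : ℝ} (ha : 0 < a) (hb : 0 < b) (hc : 0 < c)
    (hra : p (n - 1) = a * (n - 1)) (hrb : p n = b * n) (hrc : p (n + 1) = c * (n + 1))
    (h : 2 * n * log (b / a) + n * (n - 1) * log (b ^ 2 / (a * c)) < 2 * log b) :
    r n ^ 2 < r (n - 1) * r (n + 1) := by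
  have hn' : (2 : ℝ) ≤ n := by exact_mod_cast hn
  have hcast : ((n - 1 : ℕ) : ℝ) = n - 1 := by
    rw [Nat.cast_sub (by omega)]; simp
  have h1 : (0 : ℝ) < n - 1 := by linarith
  have hr0 : r (n - 1) = exp (log a / (n - 1)) := by
    unfold r
    rw [hra, hcast, mul_div_cancel_right₀ _ h1.ne', rpow_def_of_pos ha]
    congr 1; ring
  have hr1 : r n = exp (log b / n) := by
    unfold r
    rw [hrb, mul_div_cancel_right₀ _ (by linarith), rpow_def_of_pos hb]
    congr 1; ring
  have hr2 : r (n + 1) = exp (log c / (n + 1)) := by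
    unfold r
    rw [hrc, Nat.cast_add, Nat.cast_one, mul_div_cancel_right₀ _ (by linarith),
      rpow_def_of_pos hc]
    congr 1; ring
  rw [hr0, hr1, hr2, ← exp_nat_mul, ← exp_add, exp_lt_exp]
  rw [log_div hb.ne' ha.ne', log_div (by positivity) (by positivity), log_mul ha.ne' hc.ne',
    log_pow] at h
  have h2 : (0 : ℝ) < n := by linarith
  have h3 : (0 : ℝ) < n + 1 := by linarith
  push_cast at h ⊢
  rw [div_add_div _ _ h1.ne' h3.ne', mul_div_assoc', div_lt_div_iff₀ h2 (by positivity)]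
  nlinarith

/-- A guess for the binary logarithm of `x < 2 ^ 2 ^ d`. -/
def lowerLog (d : ℕ) : ℕ → ℕ :=
  Nat.rec (fun _ => 0)
    (fun d ih x => bif Nat.beq (x / 2 ^ 2 ^ d) 0 then ih x else 2 ^ d + ih (x / 2 ^ 2 ^ d)) d

/-- A sufficient integer criterion, in terms of the partition numbers `a, b, c` of
`n - 1, n, n + 1`, for log-convexity of `r` at `n`. -/
def convexAt (n a b c : ℕ) : Bool :=
  Nat.ble (2 ^ lowerLog 13 ((b / n) ^ 16)) ((b / n) ^ 16) &&
  Nat.blt (80000 * (n * ((b * (n - 1)) ^ 2 - (n * a) ^ 2) * (n ^ 2 * (a * c))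
    + n * (n - 1) * (b ^ 2 * (n ^ 2 - 1) - n ^ 2 * (a * c)) * (b * (n - 1) * (n * a))))
   (lowerLog 13 ((b / n) ^ 16) * 6931 * (b * (n - 1) * (n * a)) * (n ^ 2 * (a * c)))

theorem log_le_half_sub_inv {x : ℝ} (hx : 1 ≤ x) : log x ≤ (x ^ 2 - 1) / (2 * x) := by
  have hx0 : 0 < x := by linarith
  have h := Real.self_le_sinh_iff.2 (log_nonneg hx)
  rw [Real.sinh_log hx0] at h
  refine h.trans_eq ?_
  field_simp

set_option maxHeartbeats 1000000 in
theorem sq_r_lt_of_convexAt {n a b c : ℕ} (hn : 2 ≤ n) (ha : p (n - 1) = a) (hb : p n = b)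
    (hc : p (n + 1) = c) (h : convexAt n a b c = true) : r n ^ 2 < r (n - 1) * r (n + 1) := by
  obtain ⟨k, rfl⟩ : ∃ k, n = k + 1 := ⟨n - 1, by omega⟩
  have ha0 : (0 : ℝ) < a := ha ▸ p_pos _
  have hb0 : (0 : ℝ) < b := hb ▸ p_pos _
  have hc0 : (0 : ℝ) < c := hc ▸ p_pos _
  have hk : (1 : ℝ) ≤ k := by exact_mod_cast (by omega : 1 ≤ k)
  simp only [convexAt, Bool.and_eq_true, Nat.ble_eq, Nat.blt_eq, Nat.add_sub_cancel] at h
  obtain ⟨h1, h2⟩ := h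
  generalize lowerLog 13 ((b / (k + 1)) ^ 16) = K at h1 h2
  set A : ℝ := a / k with hA
  set B : ℝ := b / (k + 1) with hB
  set C : ℝ := c / (k + 2) with hC
  have hA0 : 0 < A := by positivity
  have hB0 : 0 < B := by positivity
  have hC0 : 0 < C := by positivity
  have hKB : (K : ℝ) * 0.6931 ≤ 16 * log B := by
    have : (2 : ℝ) ^ K ≤ B ^ 16 := by
      have h3 : ((b / (k + 1) : ℕ) : ℝ) ≤ B := by
        simpa [hB] using (Nat.cast_div_le (α := ℝ) (m := b) (n := k + 1))
      calc (2 : ℝ) ^ K ≤ ((b / (k + 1) : ℕ) : ℝ) ^ 16 := by exact_mod_cast h1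
        _ ≤ B ^ 16 := by gcongr
    have h4 := log_le_log (by positivity) this
    rw [log_pow, log_pow] at h4
    have := Real.log_two_gt_d9
    have h5 : (0 : ℝ) ≤ K := by positivity
    push_cast at h4
    nlinarith
  have hv : log (B / A) ≤ ((((b * k) ^ 2 - ((k + 1) * a) ^ 2 : ℕ) : ℝ)) /
      (2 * (b * k * ((k + 1) * a))) := by
    rcases le_total (B / A) 1 with h3 | h3
    · exact (log_nonpos (by positivity) h3).trans (by positivity)
    · refine (log_le_half_sub_inv h3).trans ?_
      have h4 : (((b * k) ^ 2 : ℕ) : ℝ) - (((k + 1) * a) ^ 2 : ℕ) ≤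
          (((b * k) ^ 2 - ((k + 1) * a) ^ 2 : ℕ) : ℝ) := by
        rw [sub_le_iff_le_add]
        exact_mod_cast (by omega)
      refine le_trans (le_of_eq ?_) (div_le_div_of_nonneg_right h4 (by positivity))
      rw [hA, hB]
      push_cast
      field_simp
  have hu : log (B ^ 2 / (A * C)) ≤ ((b ^ 2 * ((k + 1) ^ 2 - 1) - (k + 1) ^ 2 * (a * c) : ℕ) : ℝ) /
      ((k + 1) ^ 2 * (a * c)) := by
    refine (log_le_sub_one_of_pos (by positivity)).trans ?_
    have h4 : ((b ^ 2 * ((k + 1) ^ 2 - 1) : ℕ) : ℝ) - ((k + 1) ^ 2 * (a * c) : ℕ) ≤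
        ((b ^ 2 * ((k + 1) ^ 2 - 1) - (k + 1) ^ 2 * (a * c) : ℕ) : ℝ) := by
      rw [sub_le_iff_le_add]
      exact_mod_cast (by omega)
    refine le_trans (le_of_eq ?_) (div_le_div_of_nonneg_right h4 (by positivity))
    rw [hA, hB, hC, Nat.cast_mul, Nat.cast_sub (Nat.one_le_pow _ _ (by omega))]
    push_cast
    field_simp
    ring
  refine sq_r_lt_of_log_lt hn hA0 hB0 hC0 ?_ ?_ ?_ ?_
  · rw [ha, hA]; push_cast; field_simp; ring
  · rw [hb, hB]; push_cast; field_simp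
  · rw [hc, hC]; push_cast; field_simp; ring
  have h2' := (Nat.cast_lt (α := ℝ)).2 h2
  push_cast at h2' ⊢
  set U : ℝ := ((b ^ 2 * ((k + 1) ^ 2 - 1) - (k + 1) ^ 2 * (a * c) : ℕ) : ℝ)
  set V : ℝ := ((((b * k) ^ 2 - ((k + 1) * a) ^ 2 : ℕ) : ℝ))
  set v : ℝ := b * k * ((k + 1) * a) with hv'
  set u : ℝ := (k + 1) ^ 2 * (a * c) with hu'
  have hv0 : 0 < v := by positivity
  have hu0 : 0 < u := by positivity
  calc 2 * ((k : ℝ) + 1) * log (B / A) + (k + 1) * (k + 1 - 1) * log (B ^ 2 / (A * C))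
      ≤ 2 * ((k : ℝ) + 1) * (V / (2 * v)) + (k + 1) * k * (U / u) := by
        rw [add_sub_cancel_right]; gcongr
    _ = ((k + 1) * V * u + (k + 1) * k * U * v) / (v * u) := by field_simp
    _ < 2 * (K * 0.6931 / 16) := by
        rw [div_lt_iff₀ (by positivity)]
        nlinarith
    _ ≤ 2 * log B := by linarith

theorem digit_mod {b j k : ℕ} (x : ℕ) (h : j < k) :
    x % 2 ^ (b * k) / 2 ^ (b * j) % 2 ^ b = x / 2 ^ (b * j) % 2 ^ b := by
  obtain ⟨m, rfl⟩ := Nat.exists_eq_add_of_lt h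
  rw [show b * (j + m + 1) = b * j + (b + b * m) by ring, pow_add _ (b * j),
    Nat.mod_mul_right_div_self, Nat.mod_mod_of_dvd _ (pow_dvd_pow 2 (Nat.le_add_right b _))]

theorem sum_digits_lt {b N : ℕ} {c : ℕ → ℕ} (hc : ∀ i < N, c i < 2 ^ b) :
    ∑ i ∈ Finset.range N, c i * 2 ^ (b * i) < 2 ^ (b * N) := by
  induction N with
  | zero => simp
  | succ N ih =>
    have h1 := ih fun i hi => hc i (by omega)
    have h2 := hc N (by omega)
    rw [Finset.sum_range_succ, mul_add, mul_one, pow_add]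
    calc _ < 2 ^ (b * N) + c N * 2 ^ (b * N) := by gcongr
      _ = (c N + 1) * 2 ^ (b * N) := by ring
      _ ≤ 2 ^ b * 2 ^ (b * N) := by gcongr; exact h2
      _ = _ := mul_comm _ _

theorem digit_sum {b N k : ℕ} {c : ℕ → ℕ} (hc : ∀ i < N, c i < 2 ^ b) (hk : k < N) :
    (∑ i ∈ Finset.range N, c i * 2 ^ (b * i)) / 2 ^ (b * k) % 2 ^ b = c k := by
  induction N with
  | zero => omega
  | succ N ih =>
    have hc' : ∀ i < N, c i < 2 ^ b := fun i hi => hc i (by omega)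
    have h1 := sum_digits_lt hc'
    rw [Finset.sum_range_succ]
    rcases Nat.lt_or_ge k N with h | h
    · rw [← ih hc' h, ← digit_mod _ h, Nat.add_mul_mod_self_right, digit_mod _ h]
    · obtain rfl : k = N := by omega
      rw [Nat.add_mul_div_right _ _ (by positivity), Nat.div_eq_of_lt h1, zero_add,
        Nat.mod_eq_of_lt (hc k hk)]

/-- Apply `convexAt` at `n, …, n + 2 ^ d - 1` to the consecutive base `2 ^ 384` digits of `x`. -/
def scan (d : ℕ) : ℕ → ℕ → Bool :=
  Nat.rec (fun n x => convexAt n (x % 2 ^ 384) (Nat.shiftRight x 384 % 2 ^ 384)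
      (Nat.shiftRight x 768 % 2 ^ 384))
    (fun d ih n x => (ih n (x % 2 ^ (384 * (2 ^ d + 2)))).and
      (ih (n + 2 ^ d) (Nat.shiftRight x (384 * 2 ^ d)))) d

theorem shiftRight_eq (x k : ℕ) : Nat.shiftRight x k = x / 2 ^ k := Nat.shiftRight_eq_div_pow x k

set_option exponentiation.threshold 1000 in
theorem convexAt_of_scan {d n x i : ℕ} (h : scan d n x = true) (hi : i < 2 ^ d) :
    convexAt (n + i) (x / 2 ^ (384 * i) % 2 ^ 384) (x / 2 ^ (384 * (i + 1)) % 2 ^ 384)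
      (x / 2 ^ (384 * (i + 2)) % 2 ^ 384) = true := by
  induction d generalizing n x i with
  | zero =>
    obtain rfl : i = 0 := by simpa using hi
    have h' : convexAt n (x % 2 ^ 384) (Nat.shiftRight x 384 % 2 ^ 384)
      (Nat.shiftRight x 768 % 2 ^ 384) = true := h
    rw [shiftRight_eq, shiftRight_eq] at h'
    rw [Nat.mul_zero, Nat.pow_zero, Nat.div_one]
    exact h'
  | succ d ih =>
    have h' : ((scan d n (x % 2 ^ (384 * (2 ^ d + 2)))).and
      (scan d (n + 2 ^ d) (Nat.shiftRight x (384 * 2 ^ d)))) = true := h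
    rw [Bool.and_eq_true] at h'
    obtain ⟨h1, h2⟩ := h'
    rcases Nat.lt_or_ge i (2 ^ d) with hd | hd
    · have := ih h1 hd
      rwa [digit_mod _ (by omega), digit_mod _ (by omega), digit_mod _ (by omega)] at this
    · obtain ⟨j, rfl⟩ := Nat.exists_eq_add_of_le hd
      rw [pow_succ] at hi
      have := ih h2 (i := j) (by omega)
      rw [shiftRight_eq, Nat.div_div_eq_div_mul, Nat.div_div_eq_div_mul, Nat.div_div_eq_div_mul,
        ← pow_add, ← pow_add, ← pow_add, ← mul_add, ← mul_add, ← mul_add] at this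
      rw [← add_assoc n, add_assoc (2 ^ d), add_assoc (2 ^ d)]
      exact this

/-- Newton iteration for the inverse of `e` modulo `2 ^ (b * 2 ^ k)`. -/
def newton (e b k : ℕ) : ℕ :=
  Nat.rec 1 (fun j x => (x * (2 ^ (b * 2 ^ (j + 1)) + 2 - e * x % 2 ^ (b * 2 ^ (j + 1)))) %
    2 ^ (b * 2 ^ (j + 1))) k

theorem newton_succ_lt (e b k : ℕ) : newton e b (k + 1) < 2 ^ (b * 2 ^ (k + 1)) :=
  Nat.mod_lt _ (by positivity)

theorem eq_sum_partition {b m N x : ℕ} (hN : 2 * N < 2 * m * (6 * m + 1)) (hx : x < 2 ^ (b * N))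
    (hp : ∀ i < N, Fintype.card (Nat.Partition i) < 2 ^ b)
    (h : pentPos b m * x % 2 ^ (b * N) = (pentNeg b m * x + 1) % 2 ^ (b * N)) :
    x = ∑ i ∈ Finset.range N, Fintype.card (Nat.Partition i) * 2 ^ (b * i) := by
  have hS := sum_digits_lt hp
  have hdvd := dvd_sum_partition_mul_pent b m N hN
  have hcast : (∑ i ∈ Finset.range N, (Fintype.card (Nat.Partition i) : ℤ) * ((2 : ℤ) ^ b) ^ i) =
      ((∑ i ∈ Finset.range N, Fintype.card (Nat.Partition i) * 2 ^ (b * i) : ℕ) : ℤ) := by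
    push_cast
    simp [pow_mul]
  rw [hcast, ← pow_mul] at hdvd
  generalize (∑ i ∈ Finset.range N, Fintype.card (Nat.Partition i) * 2 ^ (b * i)) = S at *
  generalize pentPos b m = P at *
  generalize pentNeg b m = Q at *
  have h1 : ((2 ^ (b * N) : ℕ) : ℤ) ∣ ((Q * x + 1 : ℕ) : ℤ) - ((P * x : ℕ) : ℤ) :=
    (Nat.modEq_iff_dvd (n := 2 ^ (b * N))).1 h
  have h2 : ((2 ^ (b * N) : ℕ) : ℤ) ∣ (S : ℤ) - (x : ℕ) := by
    have e : (S : ℤ) - x = (((Q * x + 1 : ℕ) : ℤ) - ((P * x : ℕ) : ℤ)) * S +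
        (S * (P - Q) - 1) * x := by push_cast; ring
    rw [e]
    exact (h1.mul_right _).add (Dvd.dvd.mul_right (by exact_mod_cast hdvd) _)
  exact Nat.ModEq.eq_of_lt_of_lt ((Nat.modEq_iff_dvd (n := 2 ^ (b * N))).2 h2) hx hS

theorem sq_r_lt_of_scan {d k m N x : ℕ} (hk : 1 ≤ k) (hx : x < 2 ^ (384 * N))
    (hN : 2 * N < 2 * m * (6 * m + 1)) (hp : ∀ i < N, Fintype.card (Nat.Partition i) < 2 ^ 384)
    (h : Nat.beq (pentPos 384 m * x % 2 ^ (384 * N)) ((pentNeg 384 m * x + 1) % 2 ^ (384 * N)) = true)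
    (hs : scan d (k + 1) (Nat.shiftRight x (384 * k) % 2 ^ (384 * (2 ^ d + 2))) = true)
    {n : ℕ} (hn : k + 1 ≤ n) (hn' : n < k + 1 + 2 ^ d) (hnN : n + 1 < N) :
    r n ^ 2 < r (n - 1) * r (n + 1) := by
  obtain ⟨i, rfl⟩ := Nat.exists_eq_add_of_le hn
  have h1 := convexAt_of_scan hs (i := i) (by omega)
  have hdig : ∀ j < N, x / 2 ^ (384 * j) % 2 ^ 384 = Fintype.card (Nat.Partition j) := by
    intro j hj
    rw [eq_sum_partition hN hx hp (Nat.eq_of_beq_eq_true h), digit_sum hp hj]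
  rw [shiftRight_eq, digit_mod _ (by omega), digit_mod _ (by omega), digit_mod _ (by omega),
    Nat.div_div_eq_div_mul, Nat.div_div_eq_div_mul, Nat.div_div_eq_div_mul, ← pow_add, ← pow_add,
    ← pow_add, ← mul_add, ← mul_add, ← mul_add, hdig _ (by omega), hdig _ (by omega),
    hdig _ (by omega)] at h1
  refine sq_r_lt_of_convexAt (by omega) ?_ ?_ ?_ h1
  · rw [show k + 1 + i - 1 = k + i by omega]; rfl
  · rw [show k + 1 + i = k + (i + 1) by omega]; rfl
  · rw [show k + 1 + i + 1 = k + (i + 2) by omega]; rfl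

/-- The partition numbers below `10240`, packed as base `2 ^ 384` digits. -/
def partitionTable : ℕ :=
  newton (pentPos 384 42 + 2 ^ (384 * 10240) - pentNeg 384 42) 240 14

set_option exponentiation.threshold 10000000 in
theorem partitionTable_lt : partitionTable < 2 ^ (384 * 10240) := newton_succ_lt _ 240 13

set_option maxRecDepth 100000 in
set_option exponentiation.threshold 10000000 in
theorem pentPos_mul_partitionTable :
    Nat.beq (pentPos 384 42 * partitionTable % 2 ^ (384 * 10240))
      ((pentNeg 384 42 * partitionTable + 1) % 2 ^ (384 * 10240)) = true := by
  decide +kernel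

set_option maxRecDepth 100000 in
set_option exponentiation.threshold 10000000 in
theorem scan_partitionTable_small : scan 13 (60 + 1)
    (Nat.shiftRight partitionTable (384 * 60) % 2 ^ (384 * (2 ^ 13 + 2))) = true := by
  decide +kernel

set_option maxRecDepth 100000 in
set_option exponentiation.threshold 10000000 in
theorem scan_partitionTable_large : scan 11 (7999 + 1)
    (Nat.shiftRight partitionTable (384 * 7999) % 2 ^ (384 * (2 ^ 11 + 2))) = true := by
  decide +kernel

theorem sq_r_lt_of_lt (hp : ∀ i < 10240, Fintype.card (Nat.Partition i) < 2 ^ 384)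
    {n : ℕ} (hn : 61 ≤ n) (hn' : n < 10048) : r n ^ 2 < r (n - 1) * r (n + 1) := by
  have hlt := partitionTable_lt
  have hmul := pentPos_mul_partitionTable
  have hsmall := scan_partitionTable_small
  have hlarge := scan_partitionTable_large
  generalize partitionTable = x at hlt hmul hsmall hlarge
  rcases Nat.lt_or_ge n 8000 with h | h
  · exact sq_r_lt_of_scan (d := 13) (k := 60) (m := 42) (N := 10240) (by norm_num) hlt
      (by norm_num) hp hmul hsmall (by omega) (by omega) (by omega)
  · exact sq_r_lt_of_scan (d := 11) (k := 7999) (m := 42) (N := 10240) (by norm_num) hlt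
      (by norm_num) hp hmul hlarge (by omega) (by omega) (by omega)

section GeneratingFunction

open PowerSeries PowerSeries.WithPiTopology Filter Topology

/-- The number of partitions of `n` into parts of size at most `K`, as a coefficient of a product
of geometric series. -/
noncomputable def boundedCount (K n : ℕ) : ℤ :=
  coeff n (∏ i ∈ Finset.range K, PowerSeries.mk fun n => if i + 1 ∣ n then (1 : ℤ) else 0)

theorem boundedCount_succ (K n : ℕ) : boundedCount (K + 1) n =
    ∑ x ∈ Finset.HasAntidiagonal.antidiagonal n,
      boundedCount K x.1 * if K + 1 ∣ x.2 then 1 else 0 := by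
  rw [boundedCount, Finset.prod_range_succ, PowerSeries.coeff_mul]
  simp [boundedCount, coeff_mk]

theorem boundedCount_nonneg (K n : ℕ) : 0 ≤ boundedCount K n := by
  induction K generalizing n with
  | zero =>
    simp only [boundedCount, Finset.range_zero, Finset.prod_empty, coeff_one]
    split_ifs <;> norm_num
  | succ K ih =>
    rw [boundedCount_succ]
    refine Finset.sum_nonneg fun x _ => mul_nonneg (ih _) ?_
    split_ifs <;> norm_num

theorem boundedCount_monotone (n : ℕ) : Monotone fun K => boundedCount K n := by
  refine monotone_nat_of_le_succ fun K => ?_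
  rw [boundedCount_succ]
  have h : boundedCount K n = boundedCount K (n, 0).1 * if K + 1 ∣ (n, 0).2 then 1 else 0 := by simp
  rw [h]
  refine Finset.single_le_sum (f := fun x : ℕ × ℕ => boundedCount K x.1 *
    if K + 1 ∣ x.2 then (1 : ℤ) else 0) (fun x _ => mul_nonneg (boundedCount_nonneg _ _) ?_) ?_
  · split_ifs <;> norm_num
  · simp

theorem eventually_boundedCount_eq (n : ℕ) :
    ∀ᶠ K in atTop, boundedCount K n = Fintype.card (Nat.Partition n) := by
  have h := (hasProd_partition_series.tendsto_prod_nat)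
  have h' := ((continuous_coeff ℤ n).tendsto _).comp h
  rw [coeff_mk, nhds_discrete, tendsto_pure] at h'
  exact h'

theorem boundedCount_le (K n : ℕ) : (boundedCount K n : ℝ) ≤ p n := by
  obtain ⟨M, hM⟩ := eventually_atTop.1 (eventually_boundedCount_eq n)
  have h : boundedCount K n ≤ boundedCount (max K M) n :=
    boundedCount_monotone n (le_max_left K M)
  rw [hM _ (le_max_right K M)] at h
  unfold p
  exact_mod_cast h

theorem hasSum_boundedCount (K : ℕ) {z : ℂ} (hz : ‖z‖ < 1) :
    Summable (fun n => ‖(boundedCount K n : ℂ) * z ^ n‖) ∧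
    ∑' n, (boundedCount K n : ℂ) * z ^ n = ∏ i ∈ Finset.range K, (1 - z ^ (i + 1))⁻¹ := by
  induction K with
  | zero =>
    have h (n : ℕ) (hn : n ∉ ({0} : Finset ℕ)) : (boundedCount 0 n : ℂ) * z ^ n = 0 := by
      have : n ≠ 0 := by simpa using hn
      simp [boundedCount, coeff_one, this]
    refine ⟨summable_of_ne_finset_zero (s := {0}) fun n hn => by rw [h n hn, norm_zero], ?_⟩
    rw [tsum_eq_sum h]
    simp [boundedCount]
  | succ K ih =>
    have hg : HasSum (fun n : ℕ => (if K + 1 ∣ n then (1 : ℂ) else 0) * z ^ n)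
        (1 - z ^ (K + 1))⁻¹ := by
      have h1 : ‖z ^ (K + 1)‖ < 1 := by
        rw [norm_pow]; exact pow_lt_one₀ (norm_nonneg _) hz (by omega)
      have h2 := hasSum_geometric_of_norm_lt_one h1
      have hinj : Function.Injective fun m : ℕ => (K + 1) * m :=
        fun a b hab => Nat.eq_of_mul_eq_mul_left (Nat.succ_pos K) hab
      rw [← hinj.hasSum_iff]
      · refine h2.congr_fun ?_
        intro m
        simp [pow_mul]
      · intro n hn
        rw [if_neg, zero_mul]
        rintro ⟨m, rfl⟩
        exact hn ⟨m, rfl⟩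
    have hgn : Summable fun n : ℕ => ‖(if K + 1 ∣ n then (1 : ℂ) else 0) * z ^ n‖ := by
      refine Summable.of_nonneg_of_le (fun _ => norm_nonneg _) (fun n => ?_)
        (summable_geometric_of_lt_one (norm_nonneg z) hz)
      rw [norm_mul, norm_pow]
      refine mul_le_of_le_one_left (by positivity) ?_
      split_ifs <;> simp
    have hterm (n : ℕ) : (boundedCount (K + 1) n : ℂ) * z ^ n =
        ∑ x ∈ Finset.HasAntidiagonal.antidiagonal n, ((boundedCount K x.1 : ℂ) * z ^ x.1) *
          ((if K + 1 ∣ x.2 then (1 : ℂ) else 0) * z ^ x.2) := by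
      rw [boundedCount_succ, Int.cast_sum, Finset.sum_mul]
      refine Finset.sum_congr rfl fun x hx => ?_
      rw [← Finset.HasAntidiagonal.mem_antidiagonal.1 hx, pow_add]
      push_cast
      ring
    have hsum := summable_norm_sum_mul_antidiagonal_of_summable_norm ih.1 hgn
    refine ⟨hsum.congr fun n => by rw [hterm], ?_⟩
    rw [tsum_congr hterm, ← tsum_mul_tsum_eq_tsum_sum_antidiagonal_of_summable_norm ih.1 hgn, ih.2, hg.tsum_eq,
      Finset.prod_range_succ]

/-- The logarithm of the generating function of the partition numbers. -/
noncomputable def logGen (z : ℂ) : ℂ := ∑' m : ℕ, z ^ (m + 1) / ((m + 1) * (1 - z ^ (m + 1)))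

theorem hasSum_logGen {z : ℂ} (hz : ‖z‖ < 1) :
    HasSum (fun m : ℕ => z ^ (m + 1) / ((m + 1) * (1 - z ^ (m + 1)))) (logGen z) ∧
    HasSum (fun i : ℕ => -Complex.log (1 - z ^ (i + 1))) (logGen z) := by
  have hpow (m : ℕ) : ‖z ^ (m + 1)‖ < 1 := by
    rw [norm_pow]; exact pow_lt_one₀ (norm_nonneg _) hz (by omega)
  have hs : Summable fun x : ℕ × ℕ => z ^ ((x.1 + 1) * (x.2 + 1)) / ((x.2 : ℂ) + 1) := by
    have hg := summable_geometric_of_lt_one (norm_nonneg z) hz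
    refine Summable.of_norm_bounded (g := fun x : ℕ × ℕ => ‖z‖ ^ x.1 * ‖z‖ ^ x.2)
      (hg.mul_of_nonneg hg (fun _ => by positivity) (fun _ => by positivity)) fun x => ?_
    have h1 : (1 : ℝ) ≤ ‖(x.2 : ℂ) + 1‖ := by
      rw [show ((x.2 : ℂ) + 1) = ((x.2 + 1 : ℕ) : ℂ) by push_cast; ring, Complex.norm_natCast]
      push_cast; linarith [Nat.cast_nonneg (α := ℝ) x.2]
    rw [norm_div, norm_pow, ← pow_add]
    refine (div_le_self (by positivity) h1).trans ?_
    exact pow_le_pow_of_le_one (norm_nonneg _) hz.le (by nlinarith)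
  have h1 (i : ℕ) : HasSum (fun m : ℕ => z ^ ((i + 1) * (m + 1)) / ((m : ℂ) + 1))
      (-Complex.log (1 - z ^ (i + 1))) := by
    have h := (hasSum_nat_add_iff' 1).2 (Complex.hasSum_taylorSeries_neg_log (hpow i))
    simp only [Finset.range_one, Finset.sum_singleton, Nat.cast_zero, div_zero, sub_zero] at h
    refine h.congr_fun fun m => ?_
    rw [pow_mul]; push_cast; rfl
  have h2 (m : ℕ) : HasSum (fun i : ℕ => z ^ ((i + 1) * (m + 1)) / ((m : ℂ) + 1))
      (z ^ (m + 1) / ((m + 1) * (1 - z ^ (m + 1)))) := by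
    have h := ((hasSum_geometric_of_norm_lt_one (hpow m)).mul_left (z ^ (m + 1))).div_const
      ((m : ℂ) + 1)
    have e : z ^ (m + 1) * (1 - z ^ (m + 1))⁻¹ / ((m : ℂ) + 1) =
      z ^ (m + 1) / ((m + 1) * (1 - z ^ (m + 1))) := by
      rw [← div_eq_mul_inv, div_div, mul_comm]
    rw [e] at h
    refine h.congr_fun fun i => ?_
    rw [← pow_succ', ← pow_mul, mul_comm]
  have h3 := hs.hasSum.prod_fiberwise h1
  have h4 := ((Equiv.prodComm ℕ ℕ).hasSum_iff.2 hs.hasSum).prod_fiberwise h2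
  have h5 : logGen z = ∑' x : ℕ × ℕ, z ^ ((x.1 + 1) * (x.2 + 1)) / ((x.2 : ℂ) + 1) := h4.tsum_eq
  rw [h5]
  exact ⟨h4, h3⟩

theorem tendsto_prod_logGen {z : ℂ} (hz : ‖z‖ < 1) :
    Tendsto (fun K : ℕ => ∏ i ∈ Finset.range K, (1 - z ^ (i + 1))⁻¹) atTop
      (𝓝 (Complex.exp (logGen z))) := by
  have h := (hasSum_logGen hz).2.tendsto_sum_nat
  have h' := (Complex.continuous_exp.tendsto _).comp h
  refine h'.congr fun K => ?_
  rw [Function.comp_apply, Complex.exp_sum]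
  refine Finset.prod_congr rfl fun i _ => ?_
  rw [Complex.exp_neg, Complex.exp_log]
  intro h0
  have : ‖z ^ (i + 1)‖ < 1 := by
    rw [norm_pow]; exact pow_lt_one₀ (norm_nonneg _) hz (by omega)
  rw [← sub_eq_zero.1 h0] at this
  simp at this

theorem summable_p_mul_pow {x : ℝ} (hx0 : 0 ≤ x) (hx : x < 1) :
    Summable fun n => p n * x ^ n := by
  have hx' : ‖(x : ℂ)‖ < 1 := by rwa [Complex.norm_real, Real.norm_of_nonneg hx0]
  have hb := ((tendsto_prod_logGen hx').norm).bddAbove_range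
  obtain ⟨C, hC⟩ := hb
  refine summable_of_sum_range_le (c := C) (fun n => mul_nonneg (p_pos n).le (by positivity))
    fun N => ?_
  have hev : ∀ᶠ K in atTop, ∀ n ∈ Finset.range N,
      boundedCount K n = Fintype.card (Nat.Partition n) := by
    rw [Filter.eventually_all_finset]
    exact fun n _ => eventually_boundedCount_eq n
  obtain ⟨K, hK⟩ := hev.exists
  obtain ⟨h1, h2⟩ := hasSum_boundedCount K hx'
  have h3 : Summable fun n => (boundedCount K n : ℝ) * x ^ n := by
    refine h1.congr fun n => ?_
    rw [norm_mul, norm_pow, Complex.norm_real, Complex.norm_intCast, Real.norm_of_nonneg hx0,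
      abs_of_nonneg (by exact_mod_cast boundedCount_nonneg K n)]
  calc ∑ n ∈ Finset.range N, p n * x ^ n
      = ∑ n ∈ Finset.range N, (boundedCount K n : ℝ) * x ^ n := by
        refine Finset.sum_congr rfl fun n hn => ?_
        rw [hK n hn, p]; simp
    _ ≤ ∑' n, (boundedCount K n : ℝ) * x ^ n :=
        h3.sum_le_tsum _ fun n _ => mul_nonneg
          (by exact_mod_cast boundedCount_nonneg K n) (by positivity)
    _ ≤ ‖∑' n, (boundedCount K n : ℂ) * (x : ℂ) ^ n‖ := by
        have e : ∑' n, (boundedCount K n : ℂ) * (x : ℂ) ^ n =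
          ((∑' n, (boundedCount K n : ℝ) * x ^ n : ℝ) : ℂ) := by push_cast; rfl
        rw [e, Complex.norm_real]
        exact le_abs_self _
    _ ≤ C := by
        rw [h2]
        exact hC ⟨K, rfl⟩

/-- Euler's product formula for the generating function of the partition numbers, in
exponential form. -/
theorem hasSum_p_mul_pow {z : ℂ} (hz : ‖z‖ < 1) :
    HasSum (fun n => (p n : ℂ) * z ^ n) (Complex.exp (logGen z)) := by
  have hsum := summable_p_mul_pow (norm_nonneg z) hz
  have hs : Summable fun n => (p n : ℂ) * z ^ n := by
    refine Summable.of_norm_bounded hsum fun n => ?_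
    rw [norm_mul, norm_pow, Complex.norm_real, Real.norm_of_nonneg (p_pos n).le]
  refine hs.hasSum_iff.2 ?_
  have ht : Tendsto (fun K => ∑' n, (boundedCount K n : ℂ) * z ^ n) atTop
      (𝓝 (∑' n, (p n : ℂ) * z ^ n)) := by
    refine tendsto_tsum_of_dominated_convergence hsum (fun n => ?_) (Eventually.of_forall ?_)
    · refine tendsto_const_nhds.congr' ?_
      filter_upwards [eventually_boundedCount_eq n] with K hK
      rw [hK, p]; simp
    · intro K n
      rw [norm_mul, norm_pow, Complex.norm_intCast,
        abs_of_nonneg (by exact_mod_cast boundedCount_nonneg K n)]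
      exact mul_le_mul_of_nonneg_right (boundedCount_le K n) (by positivity)
  refine tendsto_nhds_unique ht ((tendsto_prod_logGen hz).congr fun K => ?_)
  exact (hasSum_boundedCount K hz).2.symm

end GeneratingFunction

section CircleIntegral

open Filter Topology MeasureTheory

theorem norm_exp_neg_add_mul_I (s t : ℝ) : ‖Complex.exp (-s + t * Complex.I)‖ = exp (-s) := by
  rw [Complex.norm_exp]; simp

theorem norm_exp_neg_add_mul_I_lt_one {s : ℝ} (hs : 0 < s) (t : ℝ) :
    ‖Complex.exp (-s + t * Complex.I)‖ < 1 := by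
  rw [norm_exp_neg_add_mul_I, exp_lt_one_iff]; linarith

theorem continuous_logGen_exp {s : ℝ} (hs : 0 < s) :
    Continuous fun t : ℝ => logGen (Complex.exp (-s + t * Complex.I)) := by
  have hq : exp (-s) < 1 := by rw [exp_lt_one_iff]; linarith
  have hne (m : ℕ) (t : ℝ) : 1 - exp (-s) ≤
      ‖1 - Complex.exp (-s + t * Complex.I) ^ (m + 1)‖ := by
    have h1 := norm_sub_norm_le (1 : ℂ) (Complex.exp (-s + t * Complex.I) ^ (m + 1))
    rw [norm_one, norm_pow, norm_exp_neg_add_mul_I] at h1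
    have h2 : exp (-s) ^ (m + 1) ≤ exp (-s) := pow_le_of_le_one (exp_pos _).le hq.le (by omega)
    linarith
  have hm (m : ℕ) : (1 : ℝ) ≤ ‖(m : ℂ) + 1‖ := by
    rw [show ((m : ℂ) + 1) = ((m + 1 : ℕ) : ℂ) by push_cast; ring, Complex.norm_natCast]
    push_cast; linarith [Nat.cast_nonneg (α := ℝ) m]
  refine continuous_tsum (u := fun m : ℕ => exp (-s) ^ (m + 1) / (1 - exp (-s))) (fun m => ?_) ?_ ?_
  · refine Continuous.div (by fun_prop) (by fun_prop) fun t => ?_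
    refine mul_ne_zero (norm_pos_iff.1 (by linarith [hm m])) (norm_pos_iff.1 ?_)
    linarith [hne m t]
  · exact ((summable_nat_add_iff 1).2
      (summable_geometric_of_lt_one (exp_pos _).le hq)).div_const _
  · intro m t
    rw [norm_div, norm_mul, norm_pow, norm_exp_neg_add_mul_I]
    refine div_le_div_of_nonneg_left (by positivity) (by linarith) ?_
    nlinarith [hm m, hne m t]

theorem integral_exp_int_mul_I (k : ℤ) :
    ∫ t in -π..π, Complex.exp (k * t * Complex.I) = if k = 0 then 2 * (π : ℂ) else 0 := by
  split_ifs with hk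
  · subst hk
    simp; ring
  · have hc : (k : ℂ) * Complex.I ≠ 0 := mul_ne_zero (by exact_mod_cast hk) Complex.I_ne_zero
    have e : (fun t : ℝ => Complex.exp (k * t * Complex.I)) =
        fun t : ℝ => Complex.exp ((k * Complex.I) * t) := by
      funext t; congr 1; ring
    rw [e, integral_exp_mul_complex hc, sub_eq_zero.2, zero_div]
    rw [Complex.exp_eq_exp_iff_exists_int]
    exact ⟨k, by push_cast; ring⟩

/-- Cauchy's formula for the partition numbers on the circle of radius `exp (-s)`. -/
theorem integral_exp_logGen {s : ℝ} (hs : 0 < s) (k : ℕ) :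
    ∫ t in -π..π, Complex.exp (logGen (Complex.exp (-s + t * Complex.I))) *
      Complex.exp (-(k * t * Complex.I)) = 2 * π * (p k * exp (-(k * s)) : ℝ) := by
  have hsum := summable_p_mul_pow (exp_pos (-s)).le (by rw [exp_lt_one_iff]; linarith)
  have h := intervalIntegral.hasSum_integral_of_dominated_convergence (μ := volume) (a := -π)
    (b := π)
    (F := fun (n : ℕ) (t : ℝ) => (p n : ℂ) * Complex.exp (-s + t * Complex.I) ^ n *
      Complex.exp (-(k * t * Complex.I)))
    (f := fun t : ℝ => Complex.exp (logGen (Complex.exp (-s + t * Complex.I))) *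
      Complex.exp (-(k * t * Complex.I)))
    (fun n _ => p n * exp (-s) ^ n)
    (fun n => Continuous.aestronglyMeasurable (by fun_prop))
    (fun n => Eventually.of_forall fun t _ => ?_)
    (Eventually.of_forall fun t _ => hsum)
    (by simp)
    (Eventually.of_forall fun t _ =>
      (hasSum_p_mul_pow (norm_exp_neg_add_mul_I_lt_one hs t)).mul_right _)
  · refine h.unique ?_
    have hInt (n : ℕ) : ∫ t in -π..π, (p n : ℂ) * Complex.exp (-s + t * Complex.I) ^ n *
        Complex.exp (-(k * t * Complex.I)) =
        if n = k then 2 * π * ((p k * exp (-(k * s)) : ℝ) : ℂ) else 0 := by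
      have e : (fun t : ℝ => (p n : ℂ) * Complex.exp (-s + t * Complex.I) ^ n *
          Complex.exp (-(k * t * Complex.I))) = fun t : ℝ => (p n * Complex.exp (-(n * s))) *
            Complex.exp (((n - k : ℤ) : ℂ) * t * Complex.I) := by
        funext t
        rw [← Complex.exp_nat_mul, mul_assoc (p n : ℂ), mul_assoc (p n : ℂ), ← Complex.exp_add, ← Complex.exp_add]
        congr 2
        push_cast; ring
      rw [e, intervalIntegral.integral_const_mul, integral_exp_int_mul_I]
      rcases eq_or_ne n k with rfl | hnk
      · simp; ring
      · rw [if_neg hnk, if_neg, mul_zero]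
        rw [sub_eq_zero]; exact_mod_cast hnk
    simp_rw [hInt]
    exact hasSum_ite_eq k _
  · rw [norm_mul, norm_mul, norm_pow, norm_exp_neg_add_mul_I, Complex.norm_real,
      Real.norm_of_nonneg (p_pos n).le]
    have : ‖Complex.exp (-(k * t * Complex.I))‖ = 1 := by
      rw [Complex.norm_exp]; simp
    rw [this, mul_one]

/-- The real part of the logarithm of the generating function at `exp (-s + t * I)`. -/
noncomputable def genRe (s t : ℝ) : ℝ := (logGen (Complex.exp (-s + t * Complex.I))).re

/-- The imaginary part of the logarithm of the generating function at `exp (-s + t * I)`. -/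
noncomputable def genIm (s t : ℝ) : ℝ := (logGen (Complex.exp (-s + t * Complex.I))).im

theorem continuous_genRe {s : ℝ} (hs : 0 < s) : Continuous (genRe s) :=
  Complex.continuous_re.comp (continuous_logGen_exp hs)

theorem continuous_genIm {s : ℝ} (hs : 0 < s) : Continuous (genIm s) :=
  Complex.continuous_im.comp (continuous_logGen_exp hs)

theorem integral_exp_genRe_mul_cos {s : ℝ} (hs : 0 < s) (k : ℕ) :
    ∫ t in -π..π, exp (genRe s t) * cos (genIm s t - k * t) = 2 * π * (p k * exp (-(k * s))) := by
  have h := congrArg Complex.re (integral_exp_logGen hs k)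
  have hc : Continuous fun t : ℝ => Complex.exp (logGen (Complex.exp (-s + t * Complex.I))) *
      Complex.exp (-(k * t * Complex.I)) := by
    have := continuous_logGen_exp hs
    fun_prop
  have h2 := Complex.reCLM.intervalIntegral_comp_comm (hc.intervalIntegrable (μ := volume) (-π) π)
  simp only [Complex.reCLM_apply] at h2
  rw [← h2] at h
  have e : (2 * π * ((p k * exp (-(k * s)) : ℝ) : ℂ)).re = 2 * π * (p k * exp (-(k * s))) := by
    rw [← Complex.ofReal_ofNat, ← Complex.ofReal_mul, ← Complex.ofReal_mul, Complex.ofReal_re]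
  rw [e] at h
  rw [← h]
  refine intervalIntegral.integral_congr fun t _ => ?_
  rw [← Complex.exp_add, Complex.exp_re]
  simp [genRe, genIm, sub_eq_add_neg]

theorem exp_sub_one_inv_re_im {x : ℝ} (hx : 0 < x) (y : ℝ) (n : ℝ) :
    (Complex.exp (-x + y * Complex.I) / (n * (1 - Complex.exp (-x + y * Complex.I)))).re =
      (sinh x / (cosh x - cos y) - 1) / (2 * n) ∧
    (Complex.exp (-x + y * Complex.I) / (n * (1 - Complex.exp (-x + y * Complex.I)))).im =
      sin y / (cosh x - cos y) / (2 * n) := by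
  have hch : 0 < cosh x - cos y := by
    have := Real.one_lt_cosh.2 hx.ne'
    linarith [cos_le_one y]
  have key : Complex.exp (-x + y * Complex.I) / (1 - Complex.exp (-x + y * Complex.I)) =
      (((sinh x / (cosh x - cos y) - 1) / 2 : ℝ) : ℂ) +
      ((sin y / (cosh x - cos y) / 2 : ℝ) : ℂ) * Complex.I := by
    have hne : (1 : ℂ) - Complex.exp (-x + y * Complex.I) ≠ 0 := by
      intro h
      have := norm_exp_neg_add_mul_I_lt_one hx y
      rw [← sub_eq_zero.1 h] at this
      simp at this
    rw [div_eq_iff hne]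
    have h1 : 2 * cosh x * exp (-x) = 1 + exp (-x) ^ 2 := by
      rw [cosh_eq, exp_neg]; field_simp
    have h2 : sinh x = cosh x - exp (-x) := by rw [cosh_eq, sinh_eq]; ring
    have h3 := sin_sq_add_cos_sq y
    have ha : (sinh x / (cosh x - cos y) - 1) / 2 * (2 * (cosh x - cos y)) = cos y - exp (-x) := by
      rw [h2]; field_simp; ring
    have hb : sin y / (cosh x - cos y) / 2 * (2 * (cosh x - cos y)) = sin y := by
      field_simp
    generalize (sinh x / (cosh x - cos y) - 1) / 2 = a at ha
    generalize sin y / (cosh x - cos y) / 2 = b at hb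
    have hD : 2 * (cosh x - cos y) ≠ 0 := by positivity
    apply Complex.ext
    · simp only [Complex.exp_re, Complex.exp_im, Complex.add_re, Complex.add_im, Complex.mul_re,
        Complex.mul_im, Complex.sub_re, Complex.sub_im, Complex.ofReal_re, Complex.ofReal_im,
        Complex.I_re, Complex.I_im, Complex.neg_re, Complex.neg_im, Complex.one_re, Complex.one_im]
      simp only [mul_zero, mul_one, add_zero, sub_zero, neg_zero, zero_add, zero_sub]
      refine mul_right_cancel₀ hD ?_
      linear_combination (cos y) * h1 - exp (-x) * h3 - (1 - exp (-x) * cos y) * ha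
        - exp (-x) * sin y * hb
    · simp only [Complex.exp_re, Complex.exp_im, Complex.add_re, Complex.add_im, Complex.mul_re,
        Complex.mul_im, Complex.sub_re, Complex.sub_im, Complex.ofReal_re, Complex.ofReal_im,
        Complex.I_re, Complex.I_im, Complex.neg_re, Complex.neg_im, Complex.one_re, Complex.one_im]
      simp only [mul_zero, mul_one, add_zero, sub_zero, neg_zero, zero_add, zero_sub]
      refine mul_right_cancel₀ hD ?_
      linear_combination (sin y) * h1 - (1 - exp (-x) * cos y) * hb + exp (-x) * sin y * ha
  have e : Complex.exp (-x + y * Complex.I) / (n * (1 - Complex.exp (-x + y * Complex.I))) =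
      Complex.exp (-x + y * Complex.I) / (1 - Complex.exp (-x + y * Complex.I)) / (n : ℂ) := by
    rw [div_div, mul_comm (n : ℂ)]
  rw [e, key, Complex.div_ofReal_re, Complex.div_ofReal_im]
  generalize sinh x / (cosh x - cos y) = a
  generalize sin y / (cosh x - cos y) = b
  simp only [Complex.add_re, Complex.add_im, Complex.mul_re,
    Complex.mul_im, Complex.ofReal_re, Complex.ofReal_im, Complex.I_re, Complex.I_im]
  constructor <;> ring

theorem hasSum_genRe_genIm {s : ℝ} (hs : 0 < s) (t : ℝ) :
    HasSum (fun m : ℕ => (sinh ((m + 1) * s) / (cosh ((m + 1) * s) - cos ((m + 1) * t)) - 1) /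
      (2 * (m + 1))) (genRe s t) ∧
    HasSum (fun m : ℕ => sin ((m + 1) * t) / (cosh ((m + 1) * s) - cos ((m + 1) * t)) /
      (2 * (m + 1))) (genIm s t) := by
  have h := (hasSum_logGen (norm_exp_neg_add_mul_I_lt_one hs t)).1
  have hterm (m : ℕ) := exp_sub_one_inv_re_im (x := (m + 1) * s) (by positivity) ((m + 1) * t) (m + 1)
  have hpow (m : ℕ) : Complex.exp (-s + t * Complex.I) ^ (m + 1) =
      Complex.exp (-((m + 1) * s : ℝ) + ((m + 1) * t : ℝ) * Complex.I) := by
    rw [← Complex.exp_nat_mul]; congr 1; push_cast; ring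
  constructor
  · refine (Complex.hasSum_re h).congr_fun fun m => ?_
    rw [← (hterm m).1, hpow]; simp
  · refine (Complex.hasSum_im h).congr_fun fun m => ?_
    rw [← (hterm m).2, hpow]; simp

end CircleIntegral

section Hyperbolic

theorem nonneg_of_hasDerivAt_nonneg {f f' : ℝ → ℝ} (h0 : f 0 = 0) (hd : ∀ x, HasDerivAt f (f' x) x)
    (h' : ∀ x, 0 ≤ x → 0 ≤ f' x) {x : ℝ} (hx : 0 ≤ x) : 0 ≤ f x := by
  have hm : MonotoneOn f (Set.Ici 0) := by
    refine monotoneOn_of_deriv_nonneg (convex_Ici 0)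
      (fun y _ => (hd y).continuousAt.continuousWithinAt)
      (fun y _ => (hd y).differentiableAt.differentiableWithinAt) fun y hy => ?_
    rw [interior_Ici] at hy
    rw [(hd y).deriv]
    exact h' y (le_of_lt hy)
  simpa [h0] using hm (Set.mem_Ici.2 le_rfl) (Set.mem_Ici.2 hx) hx

theorem sinh_le_mul_cosh {x : ℝ} (hx : 0 ≤ x) : sinh x ≤ x * cosh x := by
  have h := nonneg_of_hasDerivAt_nonneg (f := fun x => x * cosh x - sinh x)
    (f' := fun x => x * sinh x) (by simp) (fun x => ?_)
    (fun x hx => mul_nonneg hx (sinh_nonneg_iff.2 hx)) hx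
  · linarith
  · refine (((hasDerivAt_id x).mul (hasDerivAt_cosh x)).sub (hasDerivAt_sinh x)).congr_deriv ?_
    simp

theorem two_mul_cosh_sub_one_le {x : ℝ} (hx : 0 ≤ x) : 2 * (cosh x - 1) ≤ x * sinh x := by
  have h := nonneg_of_hasDerivAt_nonneg (f := fun x => x * sinh x - 2 * (cosh x - 1))
    (f' := fun x => x * cosh x - sinh x) (by simp) (fun x => ?_)
    (fun x hx => sub_nonneg.2 (sinh_le_mul_cosh hx)) hx
  · linarith
  · refine (((hasDerivAt_id x).mul (hasDerivAt_sinh x)).sub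
      (((hasDerivAt_cosh x).sub_const 1).const_mul 2)).congr_deriv ?_
    simp; ring

theorem three_mul_sinh_le {x : ℝ} (hx : 0 ≤ x) : 3 * sinh x ≤ x * (cosh x + 2) := by
  have h := nonneg_of_hasDerivAt_nonneg (f := fun x => x * (cosh x + 2) - 3 * sinh x)
    (f' := fun x => x * sinh x - 2 * (cosh x - 1)) (by simp) (fun x => ?_)
    (fun x hx => sub_nonneg.2 (two_mul_cosh_sub_one_le hx)) hx
  · linarith
  · refine (((hasDerivAt_id x).mul ((hasDerivAt_cosh x).add_const 2)).sub
      ((hasDerivAt_sinh x).const_mul 3)).congr_deriv ?_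
    simp; ring

theorem pow_three_mul_cosh_le {x : ℝ} (hx : 0 < x) : x ^ 3 * cosh x ≤ sinh x ^ 3 := by
  set F : ℝ → ℝ := fun x => 3 * log (sinh x) - log (cosh x) - 3 * log x with hF
  have hd (y : ℝ) (hy : 0 < y) : HasDerivAt F
      (3 * (cosh y / sinh y) - sinh y / cosh y - 3 * y⁻¹) y :=
    ((((hasDerivAt_sinh y).log (sinh_pos_iff.2 hy).ne').const_mul 3).sub
      ((hasDerivAt_cosh y).log (cosh_pos y).ne')).sub ((hasDerivAt_log hy.ne').const_mul 3)
  have hm : MonotoneOn F (Set.Ioi 0) := by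
    refine monotoneOn_of_deriv_nonneg (convex_Ioi 0)
      (fun y hy => (hd y hy).continuousAt.continuousWithinAt)
      (fun y hy => (hd y (by simpa using hy)).differentiableAt.differentiableWithinAt)
      fun y hy => ?_
    have hy : 0 < y := by simpa using hy
    rw [(hd y hy).deriv]
    have h1 := sinh_pos_iff.2 hy
    have h2 := cosh_pos y
    have h3 := three_mul_sinh_le (x := 2 * y) (by positivity)
    rw [sinh_two_mul, cosh_two_mul] at h3
    have h4 := cosh_sq y
    have e : 3 * (cosh y / sinh y) - sinh y / cosh y - 3 * y⁻¹ =
      (3 * y * cosh y ^ 2 - y * sinh y ^ 2 - 3 * (sinh y * cosh y)) / (sinh y * cosh y * y) := by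
      field_simp
    rw [e]
    refine div_nonneg ?_ (by positivity)
    nlinarith
  have hF0 : 0 ≤ F x := by
    have ht : Filter.Tendsto (fun e : ℝ => -log (cosh e)) (nhdsWithin 0 (Set.Ioi 0))
        (nhds 0) := by
      have hc : ContinuousAt (fun e : ℝ => -log (cosh e)) 0 :=
        (continuous_cosh.continuousAt.log (cosh_pos 0).ne').neg
      have := hc.tendsto
      rw [cosh_zero, log_one, neg_zero] at this
      exact this.mono_left nhdsWithin_le_nhds
    refine le_of_tendsto ht ?_
    filter_upwards [Ioo_mem_nhdsGT hx] with e he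
    refine le_trans ?_ (hm (Set.mem_Ioi.2 he.1) (Set.mem_Ioi.2 hx) he.2.le)
    have := log_le_log he.1 (self_le_sinh_iff.2 he.1.le)
    simp only [hF]
    linarith
  have hs := sinh_pos_iff.2 hx
  rw [← log_le_log_iff (mul_pos (by positivity) (cosh_pos x)) (by positivity),
    log_mul (by positivity) (cosh_pos x).ne', log_pow, log_pow]
  simp only [hF] at hF0
  push_cast
  linarith

theorem pow_three_mul_sinh_le {x : ℝ} (hx : 0 < x) : x ^ 3 * sinh x ≤ 4 * (cosh x - 1) ^ 2 := by
  have h := pow_three_mul_cosh_le (half_pos hx)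
  have hs := sinh_pos_iff.2 (half_pos hx)
  have e1 : sinh x = 2 * sinh (x / 2) * cosh (x / 2) := by rw [← sinh_two_mul]; ring_nf
  have e2 : cosh x = cosh (x / 2) ^ 2 + sinh (x / 2) ^ 2 := by rw [← cosh_two_mul]; ring_nf
  have e3 := cosh_sq (x / 2)
  have e4 : cosh x - 1 = 2 * sinh (x / 2) ^ 2 := by rw [e2, e3]; ring
  rw [e1, e4]
  nlinarith [mul_le_mul_of_nonneg_left h hs.le]

theorem sq_div_two_le_cosh_sub_one (x : ℝ) : x ^ 2 / 2 ≤ cosh x - 1 := by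
  have e2 : cosh x = cosh (x / 2) ^ 2 + sinh (x / 2) ^ 2 := by rw [← cosh_two_mul]; ring_nf
  have e3 := cosh_sq (x / 2)
  have h : (x / 2) ^ 2 ≤ sinh (x / 2) ^ 2 := by
    rw [sq_le_sq, abs_sinh]
    exact self_le_sinh_iff.2 (abs_nonneg _)
  nlinarith

theorem cosh_sub_one_le {x : ℝ} (hx : |x| ≤ 1) : cosh x - 1 ≤ x ^ 2 / 2 + 3 / 16 * x ^ 4 := by
  have h1 := cosh_le_exp_half_sq x
  have hx2 : x ^ 2 ≤ 1 := (sq_le_one_iff_abs_le_one x).2 hx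
  have h2 := exp_bound' (x := x ^ 2 / 2) (by positivity) (by linarith) (n := 2) (by norm_num)
  simp [Finset.sum_range_succ] at h2
  nlinarith

end Hyperbolic

section CriticalRadius

theorem two_div_le_sinh_div {x : ℝ} (hx : 0 < x) : 2 / x ≤ sinh x / (cosh x - 1) := by
  have h := two_mul_cosh_sub_one_le hx.le
  rw [div_le_div_iff₀ hx (by linarith [one_lt_cosh.2 hx.ne'])]
  linarith

theorem sinh_div_sub_one_le {x : ℝ} (hx : 0 < x) : sinh x / (cosh x - 1) - 1 ≤ 2 / x := by
  have hc : 0 < cosh x - 1 := by linarith [one_lt_cosh.2 hx.ne']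
  have h1 := add_one_le_exp x
  have h2 : 0 ≤ 1 - exp (-x) := by
    rw [sub_nonneg, exp_le_one_iff]; linarith
  have h3 : exp (-x) * exp x = 1 := by rw [← exp_add]; simp
  rw [sub_le_iff_le_add, div_add_one hx.ne', div_le_div_iff₀ hc hx, cosh_eq, sinh_eq]
  have h4 : exp (-x) * x ≤ 1 - exp (-x) := by nlinarith [exp_pos (-x)]
  nlinarith [mul_le_mul_of_nonneg_left h4 (show 0 ≤ exp x - 1 by linarith)]

theorem hasSum_inv_succ_sq : HasSum (fun m : ℕ => 1 / ((m : ℝ) + 1) ^ 2) (π ^ 2 / 6) := by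
  have h := (hasSum_nat_add_iff' 1).2 hasSum_zeta_two
  simpa using h

theorem zeta_two_le_sum_add {M : ℕ} (hM : 1 ≤ M) :
    π ^ 2 / 6 ≤ ∑ m ∈ Finset.range M, 1 / ((m : ℝ) + 1) ^ 2 + 1 / (M : ℝ) := by
  have hstep : ∀ k : ℕ, ∑ m ∈ Finset.range (M + k), 1 / ((m : ℝ) + 1) ^ 2 ≤
      ∑ m ∈ Finset.range M, 1 / ((m : ℝ) + 1) ^ 2 + 1 / (M : ℝ) - 1 / ((M : ℝ) + k) := by
    intro k
    have hM' : (0 : ℝ) < M := by exact_mod_cast hM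
    induction k with
    | zero => simp
    | succ k ih =>
      rw [← add_assoc, Finset.sum_range_succ]
      have : 1 / (((M + k : ℕ) : ℝ) + 1) ^ 2 ≤ 1 / ((M : ℝ) + k) - 1 / ((M : ℝ) + (k + 1 : ℕ)) := by
        push_cast
        rw [div_sub_div _ _ (by positivity) (by positivity), div_le_div_iff₀ (by positivity)
          (by positivity)]
        nlinarith [Nat.cast_nonneg (α := ℝ) k]
      linarith
  refine le_of_tendsto ((Filter.tendsto_add_atTop_iff_nat M).2
    hasSum_inv_succ_sq.tendsto_sum_nat) (Filter.Eventually.of_forall fun k => ?_)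
  have h1 := hstep k
  have h2 : (0 : ℝ) ≤ 1 / ((M : ℝ) + k) := by positivity
  rw [add_comm k M]
  linarith

theorem genRe_zero_le {s : ℝ} (hs : 0 < s) : genRe s 0 ≤ π ^ 2 / 6 / s := by
  refine hasSum_le (fun m => ?_) (hasSum_genRe_genIm hs 0).1 (hasSum_inv_succ_sq.div_const s)
  have hm : (0 : ℝ) < m + 1 := by positivity
  have h := sinh_div_sub_one_le (mul_pos hm hs)
  rw [mul_zero, cos_zero]
  calc _ ≤ 2 / ((m + 1) * s) / (2 * ((m : ℝ) + 1)) := by gcongr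
    _ = _ := by field_simp

theorem le_genRe_zero {s : ℝ} (hs : 0 < s) {M : ℕ} (hM : 1 ≤ M) :
    (π ^ 2 / 6 - 1 / (M : ℝ)) / s - (1 + log M) / 2 ≤ genRe s 0 := by
  have hnn (m : ℕ) : 0 ≤ (sinh ((m + 1) * s) / (cosh ((m + 1) * s) - cos ((m + 1) * 0)) - 1) /
      (2 * ((m : ℝ) + 1)) := by
    have hx : (0 : ℝ) < (m + 1) * s := by positivity
    rw [mul_zero, cos_zero]
    refine div_nonneg ?_ (by positivity)
    rw [sub_nonneg, le_div_iff₀ (by linarith [one_lt_cosh.2 hx.ne'])]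
    have : cosh ((m + 1) * s) - sinh ((m + 1) * s) = exp (-((m + 1) * s)) := by
      rw [cosh_eq, sinh_eq]; ring
    have h1 : exp (-((m + 1) * s)) ≤ 1 := by rw [exp_le_one_iff]; linarith
    linarith
  refine le_trans ?_ (sum_le_hasSum (Finset.range M) (fun m _ => hnn m)
    (hasSum_genRe_genIm hs 0).1)
  have hterm (m : ℕ) : 1 / ((m : ℝ) + 1) ^ 2 / s - 1 / (m + 1) / 2 ≤
      (sinh ((m + 1) * s) / (cosh ((m + 1) * s) - cos ((m + 1) * 0)) - 1) /
      (2 * ((m : ℝ) + 1)) := by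
    have hm : (0 : ℝ) < m + 1 := by positivity
    have h := two_div_le_sinh_div (mul_pos hm hs)
    rw [mul_zero, cos_zero]
    calc _ = (2 / ((m + 1) * s) - 1) / (2 * ((m : ℝ) + 1)) := by field_simp
      _ ≤ _ := by gcongr
  refine le_trans ?_ (Finset.sum_le_sum fun m _ => hterm m)
  rw [Finset.sum_sub_distrib, ← Finset.sum_div, ← Finset.sum_div]
  have h1 := harmonic_le_one_add_log M
  have h2 : ((harmonic M : ℚ) : ℝ) = ∑ m ∈ Finset.range M, 1 / ((m : ℝ) + 1) := by
    simp [harmonic]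
  rw [h2] at h1
  have h3 := zeta_two_le_sum_add hM
  have h4 : π ^ 2 / 6 - 1 / (M : ℝ) ≤ ∑ m ∈ Finset.range M, 1 / ((m : ℝ) + 1) ^ 2 := by linarith
  have h5 := div_le_div_of_nonneg_right h4 hs.le
  linarith

theorem p_le_exp {s : ℝ} (hs : 0 < s) (n : ℕ) : p n ≤ exp (n * s + π ^ 2 / 6 / s) := by
  have h := Complex.hasSum_re (hasSum_p_mul_pow (norm_exp_neg_add_mul_I_lt_one hs 0))
  have hterm (n : ℕ) : ((p n : ℂ) * Complex.exp (-s + (0 : ℝ) * Complex.I) ^ n).re =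
      p n * exp (-(n * s)) := by
    rw [← Complex.exp_nat_mul]
    have : (n : ℂ) * (-s + (0 : ℝ) * Complex.I) = ((-(n * s) : ℝ) : ℂ) := by push_cast; ring
    rw [this, ← Complex.ofReal_exp, ← Complex.ofReal_mul, Complex.ofReal_re]
  simp_rw [hterm] at h
  have h1 : p n * exp (-(n * s)) ≤ _ :=
    le_hasSum h n fun k _ => mul_nonneg (p_pos k).le (exp_pos _).le
  have h2 : p n * exp (-(n * s)) ≤ exp (π ^ 2 / 6 / s) := by
    refine h1.trans ((Complex.re_le_norm _).trans ?_)
    rw [Complex.norm_exp, exp_le_exp]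
    exact genRe_zero_le hs
  rw [exp_add]
  calc p n = exp (n * s) * (p n * exp (-(n * s))) := by
        rw [mul_left_comm, ← exp_add]; simp
    _ ≤ _ := by gcongr

theorem card_partition_lt {i : ℕ} (hi : i < 10240) :
    Fintype.card (Nat.Partition i) < 2 ^ 384 := by
  have h := p_le_exp (s := 1 / 79) (by norm_num) i
  have hi' : (i : ℝ) ≤ 10240 := by exact_mod_cast hi.le
  have hpi : π ^ 2 ≤ 3.1416 ^ 2 := by
    have := pi_lt_d4
    gcongr
  have h2 : exp (i * (1 / 79) + π ^ 2 / 6 / (1 / 79)) < exp (384 * log 2) := by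
    rw [exp_lt_exp]
    have := log_two_gt_d9
    norm_num at hpi ⊢
    linarith
  have h3 : exp (384 * log 2) = (2 : ℝ) ^ 384 := by
    rw [mul_comm, exp_mul, exp_log two_pos]
    exact rpow_natCast 2 384
  have h4 : (Fintype.card (Nat.Partition i) : ℝ) < 2 ^ 384 := by
    rw [← h3]; exact h.trans_lt h2
  exact_mod_cast h4

end CriticalRadius

section ArcBounds

theorem hasSum_genRe_zero_sub {s : ℝ} (hs : 0 < s) (t : ℝ) :
    HasSum (fun m : ℕ => sinh ((m + 1) * s) * (1 - cos ((m + 1) * t)) /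
      ((cosh ((m + 1) * s) - 1) * (cosh ((m + 1) * s) - cos ((m + 1) * t))) /
      (2 * ((m : ℝ) + 1))) (genRe s 0 - genRe s t) := by
  refine ((hasSum_genRe_genIm hs 0).1.sub (hasSum_genRe_genIm hs t).1).congr_fun fun m => ?_
  have hc := one_lt_cosh.2 (show ((m : ℝ) + 1) * s ≠ 0 by positivity)
  have h1 : cosh (((m : ℝ) + 1) * s) - 1 ≠ 0 := by linarith
  have h2 : cosh (((m : ℝ) + 1) * s) - cos ((m + 1) * t) ≠ 0 := by
    linarith [cos_le_one ((m + 1) * t)]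
  rw [mul_zero, cos_zero]
  field_simp
  ring

theorem genRe_zero_sub_le {s : ℝ} (hs : 0 < s) (t : ℝ) :
    genRe s 0 - genRe s t ≤ π ^ 2 / 6 / s ^ 3 * t ^ 2 := by
  refine hasSum_le (fun m => ?_) (hasSum_genRe_zero_sub hs t)
    ((hasSum_inv_succ_sq.div_const (s ^ 3)).mul_right (t ^ 2))
  have hm : (0 : ℝ) < m + 1 := by positivity
  have hx := mul_pos hm hs
  have hC : 0 < cosh (((m : ℝ) + 1) * s) - 1 := by linarith [one_lt_cosh.2 hx.ne']
  have hc : 1 - ((m + 1) * t) ^ 2 / 2 ≤ cos ((m + 1) * t) := one_sub_sq_div_two_le_cos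
  have hc' := cos_le_one ((m + 1) * t)
  have hS : 0 < sinh (((m : ℝ) + 1) * s) := sinh_pos_iff.2 hx
  have h3 := pow_three_mul_sinh_le hx
  calc _ ≤ sinh ((m + 1) * s) * (((m + 1) * t) ^ 2 / 2) /
        ((cosh ((m + 1) * s) - 1) * (cosh ((m + 1) * s) - 1)) / (2 * ((m : ℝ) + 1)) := by
        gcongr
        linarith
    _ = sinh ((m + 1) * s) / (cosh ((m + 1) * s) - 1) ^ 2 * ((m + 1) * t ^ 2 / 4) := by
        field_simp
        ring
    _ ≤ 4 / ((m + 1) * s) ^ 3 * ((m + 1) * t ^ 2 / 4) := by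
        refine mul_le_mul_of_nonneg_right ?_ (by positivity)
        rw [div_le_div_iff₀ (by positivity) (by positivity)]
        linarith
    _ = _ := by field_simp

theorem genRe_zero_sub_term_nonneg {s : ℝ} (hs : 0 < s) (t : ℝ) (m : ℕ) :
    0 ≤ sinh ((m + 1) * s) * (1 - cos ((m + 1) * t)) /
      ((cosh ((m + 1) * s) - 1) * (cosh ((m + 1) * s) - cos ((m + 1) * t))) /
      (2 * ((m : ℝ) + 1)) := by
  have hx : 0 < ((m : ℝ) + 1) * s := by positivity
  have h1 : 0 < cosh (((m : ℝ) + 1) * s) - 1 := by linarith [one_lt_cosh.2 hx.ne']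
  have h2 := cos_le_one ((m + 1) * t)
  have h3 : 0 < sinh (((m : ℝ) + 1) * s) := sinh_pos_iff.2 hx
  have h4 : 0 ≤ 1 - cos ((m + 1) * t) := by linarith
  have h5 : 0 ≤ cosh (((m : ℝ) + 1) * s) - cos ((m + 1) * t) := by linarith
  positivity

theorem le_sinh_mul_div {x y A : ℝ} (hx : 0 < x) (hx' : x ≤ 5 / 39) (hA : 0 ≤ A) (hA' : A ≤ x)
    (hy : cos y ≤ cos A) :
    99 / 50 / x * (A ^ 2 / (x ^ 2 + A ^ 2)) ≤
      sinh x * (1 - cos y) / ((cosh x - 1) * (cosh x - cos y)) := by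
  have hC : 0 < cosh x - 1 := by linarith [one_lt_cosh.2 hx.ne']
  have hC' := cosh_sub_one_le (x := x) (by rw [abs_of_pos hx]; linarith)
  have hc := (abs_le.1 (cos_bound (x := A) (by rw [abs_of_nonneg hA]; linarith))).2
  rw [abs_of_nonneg hA] at hc
  have hA2 : A ^ 2 ≤ (5 / 39) ^ 2 := by gcongr; linarith
  have hx2 : x ^ 2 ≤ (5 / 39) ^ 2 := by gcongr
  have hc1 : 499 / 1000 * A ^ 2 ≤ 1 - cos y := by nlinarith [sq_nonneg A]
  have hC1 : cosh x - 1 ≤ 504 / 1000 * x ^ 2 := by nlinarith [sq_nonneg x]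
  have hc0 : 0 ≤ 1 - cos y := le_trans (by positivity) hc1
  have h1 := two_div_le_sinh_div hx
  have h2 : 99 / 100 * (A ^ 2 / (x ^ 2 + A ^ 2)) ≤ (1 - cos y) / (cosh x - cos y) := by
    rw [← mul_div_assoc, div_le_div_iff₀ (by positivity) (by linarith)]
    nlinarith [mul_le_mul_of_nonneg_left hC1 (sq_nonneg A),
      mul_le_mul_of_nonneg_right hc1 (sq_nonneg A), mul_le_mul_of_nonneg_right hc1 (sq_nonneg x)]
  calc _ = 2 / x * (99 / 100 * (A ^ 2 / (x ^ 2 + A ^ 2))) := by ring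
    _ ≤ sinh x / (cosh x - 1) * ((1 - cos y) / (cosh x - cos y)) := by gcongr
    _ = _ := by rw [div_mul_div_comm]

theorem le_genRe_zero_sub_of_abs_le {s t : ℝ} (hs : 0 < s) (hs' : s ≤ 1 / 78) (ht : |t| ≤ s) :
    153 / 100 / s * (t ^ 2 / (s ^ 2 + t ^ 2)) ≤ genRe s 0 - genRe s t := by
  refine le_trans ?_ (sum_le_hasSum (Finset.range 10)
    (fun m _ => genRe_zero_sub_term_nonneg hs t m) (hasSum_genRe_zero_sub hs t))
  have hterm (m : ℕ) (hm : m ∈ Finset.range 10) :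
      1 / ((m : ℝ) + 1) ^ 2 * (99 / 100 / s * (t ^ 2 / (s ^ 2 + t ^ 2))) ≤
      sinh ((m + 1) * s) * (1 - cos ((m + 1) * t)) /
      ((cosh ((m + 1) * s) - 1) * (cosh ((m + 1) * s) - cos ((m + 1) * t))) /
      (2 * ((m : ℝ) + 1)) := by
    have hm10 : (m : ℝ) + 1 ≤ 10 := by
      have := Finset.mem_range.1 hm
      exact_mod_cast (show m + 1 ≤ 10 by omega)
    have hm0 : (0 : ℝ) < m + 1 := by positivity
    have h := le_sinh_mul_div (x := (m + 1) * s) (y := (m + 1) * t) (A := (m + 1) * |t|)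
      (by positivity) (by nlinarith) (by positivity) (by gcongr)
      (by rw [← cos_abs ((m + 1) * t), abs_mul, abs_of_pos hm0])
    calc _ = 99 / 50 / ((m + 1) * s) * (((m + 1) * |t|) ^ 2 /
          (((m + 1) * s) ^ 2 + ((m + 1) * |t|) ^ 2)) / (2 * ((m : ℝ) + 1)) := by
          rw [mul_pow, mul_pow, sq_abs, ← mul_add, mul_div_mul_left _ _ (by positivity)]
          field_simp
          ring
      _ ≤ _ := by gcongr
  refine le_trans ?_ (Finset.sum_le_sum hterm)
  rw [← Finset.sum_mul]
  have hsum : (17 / 11 : ℝ) ≤ ∑ m ∈ Finset.range 10, 1 / ((m : ℝ) + 1) ^ 2 := by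
    norm_num [Finset.sum_range_succ]
  calc _ = 17 / 11 * (99 / 100 / s * (t ^ 2 / (s ^ 2 + t ^ 2))) := by ring
    _ ≤ _ := by gcongr

theorem le_genRe_zero_sub_of_le_abs {s t : ℝ} (hs : 0 < s) (hs' : s ≤ 1 / 78) (ht : s ≤ |t|)
    (ht' : |t| ≤ π) : 49 / 100 / s ≤ genRe s 0 - genRe s t := by
  refine le_trans ?_ (sum_le_hasSum (Finset.range 1)
    (fun m _ => genRe_zero_sub_term_nonneg hs t m) (hasSum_genRe_zero_sub hs t))
  have h := le_sinh_mul_div (x := s) (y := t) (A := s) hs (by linarith) hs.le le_rfl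
    (by rw [← cos_abs t]; exact cos_le_cos_of_nonneg_of_le_pi hs.le ht' ht)
  have h1 : 99 / 50 / s * (s ^ 2 / (s ^ 2 + s ^ 2)) = 2 * (99 / 200 / s) := by
    field_simp
    norm_num
  rw [h1] at h
  have h2 : 49 / 100 / s ≤ 99 / 200 / s := div_le_div_of_nonneg_right (by norm_num) hs.le
  simp only [Finset.sum_range_one, Nat.cast_zero, zero_add, one_mul, mul_one]
  linarith

theorem abs_sin_div_sub_le {x y : ℝ} (hx : 0 < x) :
    |sin y / (cosh x - cos y) / 2 - y / x ^ 2| ≤ 2 * |y| / x ^ 2 := by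
  have hC := sq_div_two_le_cosh_sub_one x
  have hD : x ^ 2 / 2 ≤ cosh x - cos y := by linarith [cos_le_one y]
  have h1 : |sin y / (cosh x - cos y) / 2| ≤ |y| / x ^ 2 := by
    rw [abs_div, abs_div, abs_two, abs_of_nonneg (le_trans (by positivity) hD)]
    calc _ ≤ |y| / (x ^ 2 / 2) / 2 := by
          have := abs_sin_le_abs (x := y)
          gcongr
      _ = _ := by field_simp
  refine (abs_sub _ _).trans ?_
  rw [abs_div y, abs_of_pos (show 0 < x ^ 2 by positivity)]
  calc _ ≤ |y| / x ^ 2 + |y| / x ^ 2 := by gcongr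
    _ = _ := by ring

theorem abs_sin_div_sub_le_of_le_one {x y : ℝ} (hx : 0 < x) (hx' : x ≤ 1)
    (hy : y ^ 2 ≤ 12 / 100 * x ^ 2) :
    |sin y / (cosh x - cos y) / 2 - y / x ^ 2| ≤ |y| ^ 3 / x ^ 4 + 79 / 200 * |y| := by
  wlog hy0 : 0 ≤ y generalizing y
  · have h := this (y := -y) (by simpa using hy) (by linarith)
    rw [sin_neg, cos_neg, abs_neg] at h
    convert h using 1
    rw [← abs_neg]
    congr 1
    ring
  have hx2 : x ^ 2 ≤ 1 := by nlinarith
  have hC := sq_div_two_le_cosh_sub_one x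
  have hC' := cosh_sub_one_le (x := x) (by rwa [abs_of_pos hx])
  have hD : x ^ 2 / 2 ≤ cosh x - cos y := by linarith [cos_le_one y]
  have hD' : cosh x - cos y ≤ x ^ 2 / 2 * (1 + 3 / 8 * x ^ 2 + y ^ 2 / x ^ 2) := by
    have h := one_sub_sq_div_two_le_cos (x := y)
    have : x ^ 2 / 2 * (1 + 3 / 8 * x ^ 2 + y ^ 2 / x ^ 2) =
      x ^ 2 / 2 + 3 / 16 * x ^ 4 + y ^ 2 / 2 := by
      field_simp
      ring
    linarith
  have hD0 : 0 < cosh x - cos y := lt_of_lt_of_le (by positivity) hD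
  have hs' : sin y ≤ y := sin_le hy0
  have hs : y - y ^ 3 / 6 ≤ sin y := sin_ge_sub_cube hy0
  have hu : y ^ 2 / x ^ 2 ≤ 12 / 100 := by
    rw [div_le_iff₀ (by positivity)]; exact hy
  set w := 3 / 8 * x ^ 2 + y ^ 2 / x ^ 2 with hw
  have hw0 : 0 ≤ w := by positivity
  have hw1 : w ≤ 1 := by linarith
  have hlow : (y - y ^ 3 / 6) / x ^ 2 * (1 - w) ≤ sin y / (cosh x - cos y) / 2 := by
    have hy1 : 0 ≤ y - y ^ 3 / 6 := by nlinarith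
    have h1 : 1 - w ≤ 1 / (1 + w) := by
      rw [le_div_iff₀ (by positivity)]; nlinarith
    calc _ ≤ (y - y ^ 3 / 6) / x ^ 2 * (1 / (1 + w)) := by gcongr
      _ = (y - y ^ 3 / 6) / (x ^ 2 / 2 * (1 + w)) / 2 := by field_simp
      _ ≤ _ := by
        have hD'' : cosh x - cos y ≤ x ^ 2 / 2 * (1 + w) := by rwa [hw, ← add_assoc]
        gcongr
        exact hy1.trans hs
  have hup : sin y / (cosh x - cos y) / 2 ≤ y / x ^ 2 := by
    calc _ ≤ y / (x ^ 2 / 2) / 2 := by gcongr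
      _ = _ := by field_simp
  rw [abs_of_nonneg hy0, abs_of_nonpos (by linarith)]
  have hexp : (y - y ^ 3 / 6) / x ^ 2 * (1 - w) = y / x ^ 2 - y ^ 3 / x ^ 4 - 3 / 8 * y
      - y * (y ^ 2 / x ^ 2) / 6 * (1 - w) := by
    rw [hw]
    field_simp
    ring
  have h6 : y * (y ^ 2 / x ^ 2) / 6 * (1 - w) ≤ 1 / 50 * y := by
    calc _ ≤ y * (12 / 100) / 6 * 1 := by gcongr; linarith
      _ = _ := by ring
  linarith

theorem abs_genIm_sub_le {s t : ℝ} (hs : 0 < s) (hs' : s ≤ 1 / 78)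
    (ht : t ^ 2 ≤ 12 / 100 * s ^ 2) :
    |genIm s t - π ^ 2 / 6 / s ^ 2 * t| ≤ π ^ 2 / 6 / s ^ 4 * |t| ^ 3 + 49 / 20 / s * |t| := by
  have hsum := (hasSum_genRe_genIm hs t).2.sub
    ((hasSum_inv_succ_sq.div_const (s ^ 2)).mul_right t)
  set M := ⌊1 / s⌋₊ with hM
  have hMs : (M : ℝ) ≤ 1 / s := Nat.floor_le (by positivity)
  have hMs' : 1 / s < M + 1 := Nat.lt_floor_add_one _
  have h78 : 78 ≤ 1 / s := by rw [le_div_iff₀ hs]; linarith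
  have hM1 : 1 ≤ M := by
    have : (1 : ℝ) < M + 1 := by linarith
    have : 0 < M := by exact_mod_cast (by linarith : (0 : ℝ) < M)
    exact this
  have hbound : HasSum (fun m : ℕ => 1 / ((m : ℝ) + 1) ^ 2 / s ^ 4 * |t| ^ 3 +
      (1 / ((m : ℝ) + 1) ^ 2 / s ^ 2 * (2 * |t|) + if m ∈ Finset.range M then
        79 / 200 * |t| - 1 / ((m : ℝ) + 1) ^ 2 / s ^ 2 * (2 * |t|) else 0))
      (π ^ 2 / 6 / s ^ 4 * |t| ^ 3 + (π ^ 2 / 6 / s ^ 2 * (2 * |t|) +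
        ∑ m ∈ Finset.range M, (79 / 200 * |t| - 1 / ((m : ℝ) + 1) ^ 2 / s ^ 2 * (2 * |t|)))) := by
    refine ((hasSum_inv_succ_sq.div_const (s ^ 4)).mul_right (|t| ^ 3)).add
      (((hasSum_inv_succ_sq.div_const (s ^ 2)).mul_right (2 * |t|)).add ?_)
    rw [← Finset.sum_congr rfl fun m (hm : m ∈ Finset.range M) => if_pos hm]
    exact hasSum_sum_of_ne_finset_zero fun m hm => if_neg hm
  refine (hsum.norm_le_of_bounded hbound fun m => ?_).trans ?_
  · have hm : (0 : ℝ) < m + 1 := by positivity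
    have hterm : sin ((m + 1) * t) / (cosh ((m + 1) * s) - cos ((m + 1) * t)) /
        (2 * ((m : ℝ) + 1)) - 1 / ((m : ℝ) + 1) ^ 2 / s ^ 2 * t =
        (sin ((m + 1) * t) / (cosh ((m + 1) * s) - cos ((m + 1) * t)) / 2 -
          ((m + 1) * t) / ((m + 1) * s) ^ 2) / (m + 1) := by
      have h1 : 1 / ((m : ℝ) + 1) ^ 2 / s ^ 2 * t =
          ((m + 1) * t) / ((m + 1) * s) ^ 2 / (m + 1) := by field_simp
      rw [sub_div, div_div _ (2 : ℝ), h1]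
    rw [hterm, norm_eq_abs, abs_div, abs_of_pos hm, div_le_iff₀ hm]
    split_ifs with hmM
    · have hmM' : (m : ℝ) + 1 ≤ M := by exact_mod_cast Finset.mem_range.1 hmM
      refine (abs_sin_div_sub_le_of_le_one (mul_pos hm hs) ?_ ?_).trans (le_of_eq ?_)
      · rw [← le_div_iff₀ hs]; linarith
      · rw [mul_pow, mul_pow]; nlinarith [sq_nonneg ((m : ℝ) + 1)]
      · rw [abs_mul, abs_of_pos hm]
        field_simp
        ring
    · refine (abs_sin_div_sub_le (mul_pos hm hs)).trans ?_
      rw [abs_mul, abs_of_pos hm, add_zero]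
      have h0 : 0 ≤ 1 / ((m : ℝ) + 1) ^ 2 / s ^ 4 * |t| ^ 3 * (m + 1) := by positivity
      have h1 : 2 * (((m : ℝ) + 1) * |t|) / ((m + 1) * s) ^ 2 =
          1 / ((m : ℝ) + 1) ^ 2 / s ^ 2 * (2 * |t|) * (m + 1) := by field_simp
      rw [h1, add_mul _ _ ((m : ℝ) + 1)]
      linarith
  · rw [Finset.sum_sub_distrib, Finset.sum_const, Finset.card_range, nsmul_eq_mul,
      ← Finset.sum_mul, ← Finset.sum_div]
    have hz := zeta_two_le_sum_add hM1
    have hinv : 1 / (M : ℝ) ≤ 78 / 77 * s := by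
      have : 77 / 78 * (1 / s) ≤ M := by linarith
      calc 1 / (M : ℝ) ≤ 1 / (77 / 78 * (1 / s)) := by gcongr
        _ = _ := by field_simp
    have h1 : π ^ 2 / 6 / s ^ 2 * (2 * |t|) -
        (∑ m ∈ Finset.range M, 1 / ((m : ℝ) + 1) ^ 2) / s ^ 2 * (2 * |t|) ≤
        78 / 77 * s / s ^ 2 * (2 * |t|) := by
      rw [← sub_mul, ← sub_div]
      gcongr
      linarith
    have h2 : 78 / 77 * s / s ^ 2 * (2 * |t|) = 156 / 77 * (1 / s * |t|) := by
      field_simp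
      ring
    have h3 : (M : ℝ) * (79 / 200 * |t|) ≤ 79 / 200 * (1 / s * |t|) := by
      nlinarith [abs_nonneg t]
    have h4 : 0 ≤ 1 / s * |t| := by positivity
    have h5 : 49 / 20 / s * |t| = 49 / 20 * (1 / s * |t|) := by ring
    linarith

end ArcBounds

section GaussianMoments

theorem integral_exp_neg_mul_sq_le {b : ℝ} (hb : 0 < b) (L : ℝ) (hL : 0 ≤ L) :
    ∫ t in -L..L, exp (-(b * t ^ 2)) ≤ √(π / b) := by
  rw [intervalIntegral.integral_of_le (by linarith)]
  have h := integral_gaussian b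
  simp_rw [neg_mul] at h
  rw [← h]
  refine MeasureTheory.setIntegral_le_integral ?_ (Filter.Eventually.of_forall fun t => by positivity)
  simpa only [neg_mul] using integrable_exp_neg_mul_sq hb

theorem integral_pow_mul_exp_neg_mul_sq_le {b : ℝ} (hb : 0 < b) {L : ℝ} (hL : 0 ≤ L) (k : ℕ) :
    ∫ t in -L..L, t ^ (2 * k + 2) * exp (-(b * t ^ 2)) ≤
      (2 * k + 1) / (2 * b) * ∫ t in -L..L, t ^ (2 * k) * exp (-(b * t ^ 2)) := by
  have hderiv (t : ℝ) : HasDerivAt (fun t => t ^ (2 * k + 1) * exp (-(b * t ^ 2)))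
      ((2 * k + 1) * (t ^ (2 * k) * exp (-(b * t ^ 2))) -
        2 * b * (t ^ (2 * k + 2) * exp (-(b * t ^ 2)))) t := by
    have h := (hasDerivAt_pow (2 * k + 1) t).mul (((hasDerivAt_pow 2 t).const_mul b).neg.exp)
    refine h.congr_deriv ?_
    push_cast
    simp only [Pi.neg_apply, pow_succ]
    ring
  have hint1 : IntervalIntegrable (fun t : ℝ => t ^ (2 * k) * exp (-(b * t ^ 2)))
    MeasureTheory.volume (-L) L := (by fun_prop : Continuous _).intervalIntegrable _ _
  have hint2 : IntervalIntegrable (fun t : ℝ => t ^ (2 * k + 2) * exp (-(b * t ^ 2)))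
    MeasureTheory.volume (-L) L := (by fun_prop : Continuous _).intervalIntegrable _ _
  have h := intervalIntegral.integral_eq_sub_of_hasDerivAt (fun t _ => hderiv t)
    ((hint1.const_mul _).sub (hint2.const_mul _))
  rw [intervalIntegral.integral_sub (hint1.const_mul _) (hint2.const_mul _),
    intervalIntegral.integral_const_mul, intervalIntegral.integral_const_mul,
    Odd.neg_pow ⟨k, rfl⟩, neg_sq] at h
  have h0 : 0 ≤ L ^ (2 * k + 1) * exp (-(b * L ^ 2)) := by positivity
  rw [div_mul_eq_mul_div, le_div_iff₀ (by positivity)]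
  linarith

theorem integral_sq_mul_exp_neg_mul_sq_le {b : ℝ} (hb : 0 < b) {L : ℝ} (hL : 0 ≤ L) :
    ∫ t in -L..L, t ^ 2 * exp (-(b * t ^ 2)) ≤ 1 / (2 * b) * √(π / b) := by
  have h := integral_pow_mul_exp_neg_mul_sq_le hb hL 0
  simp only [mul_zero, zero_add, pow_zero, one_mul, Nat.cast_zero] at h
  refine h.trans ?_
  gcongr
  exact integral_exp_neg_mul_sq_le hb L hL

theorem integral_pow_six_mul_exp_neg_mul_sq_le {b : ℝ} (hb : 0 < b) {L : ℝ} (hL : 0 ≤ L) :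
    ∫ t in -L..L, t ^ 6 * exp (-(b * t ^ 2)) ≤ 15 / (8 * b ^ 3) * √(π / b) := by
  have h4 := integral_pow_mul_exp_neg_mul_sq_le hb hL 1
  have h6 := integral_pow_mul_exp_neg_mul_sq_le hb hL 2
  norm_num at h4 h6
  calc _ ≤ 5 / (2 * b) * (3 / (2 * b) * (1 / (2 * b) * √(π / b))) := by
        refine h6.trans ?_
        gcongr
        refine h4.trans ?_
        gcongr
        exact integral_sq_mul_exp_neg_mul_sq_le hb hL
    _ = _ := by
        field_simp
        norm_num

theorem integral_abs_mul_exp_neg_mul_sq_le {b : ℝ} (hb : 0 < b) {L : ℝ} (hL : 0 ≤ L) :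
    ∫ t in -L..L, |t| * exp (-(b * t ^ 2)) ≤ 1 / b := by
  have hcont : Continuous fun t : ℝ => |t| * exp (-(b * t ^ 2)) := by fun_prop
  have hderiv (t : ℝ) : HasDerivAt (fun t => exp (-(b * t ^ 2)) / (2 * b))
      (-(t * exp (-(b * t ^ 2)))) t := by
    refine ((((hasDerivAt_pow 2 t).const_mul b).neg.exp).div_const (2 * b)).congr_deriv ?_
    field_simp
    norm_num
    ring
  have hInt (u w : ℝ) : IntervalIntegrable (fun t : ℝ => -(t * exp (-(b * t ^ 2))))
    MeasureTheory.volume u w := (by fun_prop : Continuous _).intervalIntegrable _ _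
  have h1 : ∫ t in -L..0, |t| * exp (-(b * t ^ 2)) ≤ 1 / (2 * b) := by
    have h := intervalIntegral.integral_eq_sub_of_hasDerivAt (fun t _ => hderiv t) (hInt (-L) 0)
    have hcongr : ∫ t in -L..0, |t| * exp (-(b * t ^ 2)) =
        ∫ t in -L..0, -(t * exp (-(b * t ^ 2))) := by
      refine intervalIntegral.integral_congr fun t ht => ?_
      rw [Set.uIcc_of_le (by linarith)] at ht
      simp only [abs_of_nonpos ht.2, neg_mul]
    rw [hcongr, h]
    have : 0 ≤ exp (-(b * (-L) ^ 2)) / (2 * b) := by positivity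
    simp only [ne_eq, OfNat.ofNat_ne_zero, not_false_eq_true, zero_pow, mul_zero, neg_zero,
      exp_zero]
    linarith
  have h2 : ∫ t in 0..L, |t| * exp (-(b * t ^ 2)) ≤ 1 / (2 * b) := by
    have h := intervalIntegral.integral_eq_sub_of_hasDerivAt (fun t _ => hderiv t) (hInt 0 L)
    have hcongr : ∫ t in 0..L, |t| * exp (-(b * t ^ 2)) =
        -∫ t in 0..L, -(t * exp (-(b * t ^ 2))) := by
      rw [← intervalIntegral.integral_neg]
      refine intervalIntegral.integral_congr fun t ht => ?_
      rw [Set.uIcc_of_le hL] at ht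
      simp only [abs_of_nonneg ht.1, neg_neg]
    rw [hcongr, h]
    have : 0 ≤ exp (-(b * L ^ 2)) / (2 * b) := by positivity
    simp only [ne_eq, OfNat.ofNat_ne_zero, not_false_eq_true, zero_pow, mul_zero, neg_zero,
      exp_zero]
    linarith
  rw [← intervalIntegral.integral_add_adjacent_intervals (hcont.intervalIntegrable (-L) 0)
    (hcont.intervalIntegrable 0 L)]
  calc _ ≤ 1 / (2 * b) + 1 / (2 * b) := add_le_add h1 h2
    _ = _ := by field_simp; norm_num

theorem le_integral_exp_sub_mul_exp {b b₁ K L : ℝ} (hb₁ : 0 < b₁) (hb : b₁ ≤ b) (hL : 0 ≤ L)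
    (hK : exp (-((b - b₁) * L ^ 2)) ≤ K) :
    √(π / b) - K * √(π / b₁) ≤
      ∫ t in -L..L, (exp (-(b * t ^ 2)) - K * exp (-(b₁ * t ^ 2))) := by
  have hi : MeasureTheory.Integrable fun t : ℝ => exp (-(b * t ^ 2)) := by
    simpa only [neg_mul] using integrable_exp_neg_mul_sq (hb₁.trans_le hb)
  have hi₁ : MeasureTheory.Integrable fun t : ℝ => K * exp (-(b₁ * t ^ 2)) := by
    simpa only [neg_mul] using (integrable_exp_neg_mul_sq hb₁).const_mul K
  have h0 := integral_gaussian b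
  have h1 := integral_gaussian b₁
  simp_rw [neg_mul] at h0 h1
  have hR : ∫ t : ℝ, (exp (-(b * t ^ 2)) - K * exp (-(b₁ * t ^ 2))) =
      √(π / b) - K * √(π / b₁) := by
    rw [MeasureTheory.integral_sub hi hi₁, MeasureTheory.integral_const_mul, h0, h1]
  rw [intervalIntegral.integral_of_le (by linarith), ← hR,
    ← MeasureTheory.integral_add_compl (f := fun t => exp (-(b * t ^ 2)) - K * exp (-(b₁ * t ^ 2)))
      (measurableSet_Ioc (a := -L) (b := L)) (hi.sub hi₁)]
  refine add_le_of_nonpos_right (MeasureTheory.setIntegral_nonpos measurableSet_Ioc.compl ?_)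
  intro t ht
  have hLt : L ^ 2 ≤ t ^ 2 := by
    rw [sq_le_sq, abs_of_nonneg hL, le_abs]
    by_contra! hcon
    exact ht ⟨by linarith, hcon.1.le⟩
  rw [sub_nonpos]
  calc exp (-(b * t ^ 2)) = exp (-((b - b₁) * t ^ 2)) * exp (-(b₁ * t ^ 2)) := by
        rw [← exp_add]; congr 1; ring
    _ ≤ exp (-((b - b₁) * L ^ 2)) * exp (-(b₁ * t ^ 2)) := by
        gcongr
    _ ≤ _ := by gcongr

end GaussianMoments

section ArcIntegrals

/-- A majorant of `exp (genRe s t - genRe s 0)` for `|t| ≤ π` when `s` is small. -/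
noncomputable def arcMajorant (s t : ℝ) : ℝ :=
  exp (-(153 / 112 / s ^ 3 * t ^ 2)) +
    exp (-(1229 / 10000 / s)) * exp (-(153 / 800 / s ^ 3 * t ^ 2)) + exp (-(49 / 100 / s))

theorem exp_genRe_sub_le_of_sq_le {s t : ℝ} (hs : 0 < s) (hs' : s ≤ 1 / 78)
    (ht : t ^ 2 ≤ 12 / 100 * s ^ 2) :
    exp (genRe s t - genRe s 0) ≤ exp (-(153 / 112 / s ^ 3 * t ^ 2)) := by
  have hts : |t| ≤ s := by
    rw [← abs_of_pos hs, ← sq_le_sq]; nlinarith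
  have h := le_genRe_zero_sub_of_abs_le hs hs' hts
  have h1 : 153 / 112 / s ^ 3 * t ^ 2 ≤ 153 / 100 / s * (t ^ 2 / (s ^ 2 + t ^ 2)) := by
    calc _ = 153 / 100 / s * (t ^ 2 / (s ^ 2 + 12 / 100 * s ^ 2)) := by
          field_simp
          ring
      _ ≤ _ := by gcongr
  gcongr
  linarith

theorem exp_genRe_sub_le_of_lt_sq {s t : ℝ} (hs : 0 < s) (hs' : s ≤ 1 / 78)
    (ht : 12 / 100 * s ^ 2 < t ^ 2) (htpi : |t| ≤ π) :
    exp (genRe s t - genRe s 0) ≤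
      exp (-(1229 / 10000 / s)) * exp (-(153 / 800 / s ^ 3 * t ^ 2)) + exp (-(49 / 100 / s)) := by
  rcases le_total |t| s with hts | hts
  · have h := le_genRe_zero_sub_of_abs_le hs hs' hts
    have hts2 : t ^ 2 ≤ s ^ 2 := by rwa [sq_le_sq, abs_of_pos hs]
    have h1 : 1229 / 1530 * (1 / 10) + 1 / 8 * (t ^ 2 / s ^ 2) ≤ t ^ 2 / (s ^ 2 + t ^ 2) := by
      have h2 : t ^ 2 / (2 * s ^ 2) ≤ t ^ 2 / (s ^ 2 + t ^ 2) := by gcongr; linarith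
      have h3 : (12 / 112 : ℝ) ≤ t ^ 2 / (s ^ 2 + t ^ 2) := by
        rw [le_div_iff₀ (by positivity)]; linarith
      have h4 : t ^ 2 / (2 * s ^ 2) = 1 / 2 * (t ^ 2 / s ^ 2) := by field_simp
      linarith
    refine le_add_of_le_of_nonneg ?_ (exp_pos _).le
    rw [← exp_add]
    gcongr
    have h5 := mul_le_mul_of_nonneg_left h1 (show 0 ≤ 153 / 100 / s by positivity)
    have h6 : 153 / 100 / s * (1229 / 1530 * (1 / 10) + 1 / 8 * (t ^ 2 / s ^ 2)) =
        1229 / 10000 / s + 153 / 800 / s ^ 3 * t ^ 2 := by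
      field_simp
      ring
    linarith
  · have h := le_genRe_zero_sub_of_le_abs hs hs' hts htpi
    refine le_add_of_nonneg_of_le (by positivity) ?_
    gcongr
    linarith

theorem exp_genRe_sub_le_arcMajorant {s t : ℝ} (hs : 0 < s) (hs' : s ≤ 1 / 78) (ht : |t| ≤ π) :
    exp (genRe s t - genRe s 0) ≤ arcMajorant s t := by
  rw [arcMajorant, add_assoc]
  rcases le_or_gt (t ^ 2) (12 / 100 * s ^ 2) with h | h
  · exact le_add_of_le_of_nonneg (exp_genRe_sub_le_of_sq_le hs hs' h) (by positivity)
  · exact le_add_of_nonneg_of_le (by positivity) (exp_genRe_sub_le_of_lt_sq hs hs' h ht)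

theorem le_exp_genRe_sub_mul_cos {s t : ℝ} (hs : 0 < s) (hs' : s ≤ 1 / 78) (ht : |t| ≤ π) :
    (exp (-(π ^ 2 / 6 / s ^ 3 * t ^ 2)) -
        2 * exp (-(1229 / 10000 / s)) * exp (-(153 / 800 / s ^ 3 * t ^ 2))) -
      ((π ^ 2 / 6 / s ^ 4) ^ 2 * (t ^ 6 * exp (-(153 / 112 / s ^ 3 * t ^ 2))) +
        (49 / 20 / s) ^ 2 * (t ^ 2 * exp (-(153 / 112 / s ^ 3 * t ^ 2)))) -
      2 * exp (-(49 / 100 / s)) ≤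
    exp (genRe s t - genRe s 0) * cos (genIm s t - π ^ 2 / 6 / s ^ 2 * t) := by
  have hlow : exp (-(π ^ 2 / 6 / s ^ 3 * t ^ 2)) ≤ exp (genRe s t - genRe s 0) := by
    have := genRe_zero_sub_le hs t
    gcongr
    linarith
  have hW := exp_pos (genRe s t - genRe s 0)
  have hG := exp_pos (-(153 / 112 / s ^ 3 * t ^ 2))
  have hk : 0 ≤ exp (-(1229 / 10000 / s)) * exp (-(153 / 800 / s ^ 3 * t ^ 2)) := by positivity
  have hk2 := exp_pos (-(49 / 100 / s))
  rcases le_or_gt (t ^ 2) (12 / 100 * s ^ 2) with h | h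
  · have hup := exp_genRe_sub_le_of_sq_le hs hs' h
    have hth := abs_genIm_sub_le hs hs' h
    have hcos := one_sub_sq_div_two_le_cos (x := genIm s t - π ^ 2 / 6 / s ^ 2 * t)
    have hsq : (genIm s t - π ^ 2 / 6 / s ^ 2 * t) ^ 2 / 2 ≤
        (π ^ 2 / 6 / s ^ 4) ^ 2 * t ^ 6 + (49 / 20 / s) ^ 2 * t ^ 2 := by
      rw [← sq_abs (genIm s t - π ^ 2 / 6 / s ^ 2 * t)]
      have h1 : |genIm s t - π ^ 2 / 6 / s ^ 2 * t| ^ 2 ≤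
          (π ^ 2 / 6 / s ^ 4 * |t| ^ 3 + 49 / 20 / s * |t|) ^ 2 := by gcongr
      have h2 : (π ^ 2 / 6 / s ^ 4) ^ 2 * t ^ 6 = (π ^ 2 / 6 / s ^ 4 * |t| ^ 3) ^ 2 := by
        rw [mul_pow, ← pow_mul, (by decide : Even (3 * 2)).pow_abs]
      have h3 : (49 / 20 / s) ^ 2 * t ^ 2 = (49 / 20 / s * |t|) ^ 2 := by rw [mul_pow, sq_abs]
      rw [h2, h3]
      nlinarith [sq_nonneg (π ^ 2 / 6 / s ^ 4 * |t| ^ 3 - 49 / 20 / s * |t|)]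
    have h4 : exp (genRe s t - genRe s 0) *
        ((genIm s t - π ^ 2 / 6 / s ^ 2 * t) ^ 2 / 2) ≤ exp (-(153 / 112 / s ^ 3 * t ^ 2)) *
        ((π ^ 2 / 6 / s ^ 4) ^ 2 * t ^ 6 + (49 / 20 / s) ^ 2 * t ^ 2) := by gcongr
    have h5 := mul_le_mul_of_nonneg_left hcos hW.le
    linarith
  · have hup := exp_genRe_sub_le_of_lt_sq hs hs' h ht
    have h5 := mul_le_mul_of_nonneg_left (neg_one_le_cos (genIm s t - π ^ 2 / 6 / s ^ 2 * t)) hW.le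
    have h6 : 0 ≤ (π ^ 2 / 6 / s ^ 4) ^ 2 * (t ^ 6 * exp (-(153 / 112 / s ^ 3 * t ^ 2))) +
        (49 / 20 / s) ^ 2 * (t ^ 2 * exp (-(153 / 112 / s ^ 3 * t ^ 2))) := by positivity
    linarith

end ArcIntegrals

section ArcEstimates

theorem exp_neg_minor_arc_le {s : ℝ} (hs : 0 < s) (hs' : s ≤ 1 / 78) :
    exp (-(1229 / 10000 / s)) ≤ 14 / 100000 := by
  have h1 : 9 ≤ 1229 / 10000 / s := by rw [le_div_iff₀ hs]; linarith
  have h2 : (100000 / 14 : ℝ) ≤ exp 9 := by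
    have h := exp_one_gt_d9
    calc (100000 / 14 : ℝ) ≤ 2.7182818283 ^ 9 := by norm_num
      _ ≤ exp 1 ^ 9 := by gcongr
      _ = exp 9 := by rw [← exp_nat_mul]; norm_num
  calc exp (-(1229 / 10000 / s)) ≤ exp (-9) := by gcongr
    _ = 1 / exp 9 := by rw [exp_neg, one_div]
    _ ≤ 1 / (100000 / 14) := by gcongr
    _ = _ := by norm_num

theorem exp_neg_far_arc_le {s : ℝ} (hs : 0 < s) (hs' : s ≤ 1 / 78) :
    exp (-(49 / 100 / s)) ≤ 1 / 1000000 * s ^ 5 := by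
  have h78 : 78 ≤ 1 / s := by rw [le_div_iff₀ hs]; linarith
  have h1 : (1 / (78 * s)) ^ 5 ≤ exp (49 / 100 / s - 38) := by
    have h2 : 1 / (78 * s) ≤ exp (1 / (78 * s) - 1) := by
      linarith [add_one_le_exp (1 / (78 * s) - 1)]
    calc (1 / (78 * s)) ^ 5 ≤ exp (1 / (78 * s) - 1) ^ 5 := by gcongr
      _ = exp (5 * (1 / (78 * s) - 1)) := by rw [← exp_nat_mul]; norm_num
      _ ≤ _ := by
        gcongr
        have h3 : 1 / (78 * s) = 1 / 78 * (1 / s) := by field_simp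
        have h4 : 49 / 100 / s = 49 / 100 * (1 / s) := by ring
        rw [h3, h4]
        linarith
  have h5 : (1000000 * 78 ^ 5 : ℝ) ≤ exp 38 := by
    have h := exp_one_gt_d9
    calc (1000000 * 78 ^ 5 : ℝ) ≤ 2.7182818283 ^ 38 := by norm_num
      _ ≤ exp 1 ^ 38 := by gcongr
      _ = exp 38 := by rw [← exp_nat_mul]; norm_num
  have h6 : 1000000 * (1 / s) ^ 5 ≤ exp (49 / 100 / s) := by
    calc 1000000 * (1 / s) ^ 5 = (1 / (78 * s)) ^ 5 * (1000000 * 78 ^ 5) := by field_simp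
      _ ≤ exp (49 / 100 / s - 38) * exp 38 := by gcongr
      _ = _ := by rw [← exp_add]; congr 1; ring
  rw [exp_neg]
  calc (exp (49 / 100 / s))⁻¹ ≤ (1000000 * (1 / s) ^ 5)⁻¹ := by gcongr
    _ = _ := by field_simp

theorem sqrt_pi_div_le {s b C : ℝ} (hs : 0 < s) (hb : 0 < b) (hC : 0 ≤ C) (h : 1 ≤ C ^ 2 * b) :
    √(π / (b / s ^ 3)) ≤ C * √(π * s ^ 3) := by
  rw [← sqrt_sq hC, ← sqrt_mul (sq_nonneg C)]
  apply sqrt_le_sqrt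
  rw [div_div_eq_mul_div, div_le_iff₀ hb]
  nlinarith [show 0 < π * s ^ 3 by positivity]

theorem le_sqrt_pi_div {s b C : ℝ} (hs : 0 < s) (hb : 0 < b) (hC : 0 ≤ C) (h : C ^ 2 * b ≤ 1) :
    C * √(π * s ^ 3) ≤ √(π / (b / s ^ 3)) := by
  rw [← sqrt_sq hC, ← sqrt_mul (sq_nonneg C)]
  apply sqrt_le_sqrt
  rw [div_div_eq_mul_div, le_div_iff₀ hb]
  nlinarith [show 0 < π * s ^ 3 by positivity]

theorem sq_le_sqrt_pi_mul {s : ℝ} (hs : 0 < s) (hs' : s ≤ 1 / 78) : s ^ 2 ≤ √(π * s ^ 3) := by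
  apply le_sqrt_of_sq_le
  have h3 : 0 < s ^ 3 := by positivity
  nlinarith [pi_gt_three]

theorem pi_sq_div_six_lt : π ^ 2 / 6 < 1.645 := by
  nlinarith [pi_lt_d4, pi_pos]

theorem lt_pi_sq_div_six : 1.6448 < π ^ 2 / 6 := by
  nlinarith [pi_gt_d4]

theorem le_integral_exp_genRe_sub_mul_cos {s : ℝ} (hs : 0 < s) (hs' : s ≤ 1 / 78) :
    73 / 100 * √(π * s ^ 3) ≤ ∫ t in -π..π,
      exp (genRe s t - genRe s 0) * cos (genIm s t - π ^ 2 / 6 / s ^ 2 * t) := by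
  have hre := continuous_genRe hs
  have him := continuous_genIm hs
  have hpi := pi_pos
  set κ₁ := exp (-(1229 / 10000 / s)) with hκ₁
  set κ₂ := exp (-(49 / 100 / s)) with hκ₂
  set Y := √(π * s ^ 3) with hY
  have hκ₁' : κ₁ ≤ 14 / 100000 := exp_neg_minor_arc_le hs hs'
  have hκ₂' : κ₂ ≤ 1 / 1000000 * s ^ 5 := exp_neg_far_arc_le hs hs'
  have hYs : s ^ 2 ≤ Y := sq_le_sqrt_pi_mul hs hs'
  have hY0 : 0 < Y := lt_of_lt_of_le (by positivity) hYs
  have hb : (0 : ℝ) < 153 / 112 / s ^ 3 := by positivity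
  have hb₁ : (0 : ℝ) < 153 / 800 / s ^ 3 := by positivity
  have hZ := pi_sq_div_six_lt
  have hZ' := lt_pi_sq_div_six
  have hmono := intervalIntegral.integral_mono_on (a := -π) (b := π)
    (μ := MeasureTheory.volume) (by linarith)
    ((by fun_prop : Continuous fun t : ℝ => (exp (-(π ^ 2 / 6 / s ^ 3 * t ^ 2)) -
        2 * κ₁ * exp (-(153 / 800 / s ^ 3 * t ^ 2))) -
      ((π ^ 2 / 6 / s ^ 4) ^ 2 * (t ^ 6 * exp (-(153 / 112 / s ^ 3 * t ^ 2))) +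
        (49 / 20 / s) ^ 2 * (t ^ 2 * exp (-(153 / 112 / s ^ 3 * t ^ 2)))) -
      2 * κ₂).intervalIntegrable _ _)
    ((by fun_prop : Continuous fun t : ℝ => exp (genRe s t - genRe s 0) *
      cos (genIm s t - π ^ 2 / 6 / s ^ 2 * t)).intervalIntegrable _ _)
    (fun t ht => le_exp_genRe_sub_mul_cos hs hs' (abs_le.2 ht))
  refine le_trans ?_ hmono
  rw [intervalIntegral.integral_sub (by apply Continuous.intervalIntegrable; fun_prop)
      (by apply Continuous.intervalIntegrable; fun_prop),
    intervalIntegral.integral_sub (by apply Continuous.intervalIntegrable; fun_prop)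
      (by apply Continuous.intervalIntegrable; fun_prop),
    intervalIntegral.integral_add (by apply Continuous.intervalIntegrable; fun_prop)
      (by apply Continuous.intervalIntegrable; fun_prop),
    intervalIntegral.integral_const_mul, intervalIntegral.integral_const_mul,
    intervalIntegral.integral_const, smul_eq_mul]
  have h0 : √(π / (π ^ 2 / 6 / s ^ 3)) - 2 * κ₁ * √(π / (153 / 800 / s ^ 3)) ≤
      ∫ t in -π..π, (exp (-(π ^ 2 / 6 / s ^ 3 * t ^ 2)) -
        2 * κ₁ * exp (-(153 / 800 / s ^ 3 * t ^ 2))) := by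
    refine le_integral_exp_sub_mul_exp hb₁
      (div_le_div_of_nonneg_right (by linarith) (by positivity)) hpi.le ?_
    have : exp (-((π ^ 2 / 6 / s ^ 3 - 153 / 800 / s ^ 3) * π ^ 2)) ≤ κ₁ := by
      rw [hκ₁, exp_le_exp, neg_le_neg_iff, ← sub_div, div_mul_eq_mul_div]
      have hs31 : s ^ 3 ≤ s := by nlinarith [sq_nonneg s]
      have hnum : 1229 / 10000 ≤ (π ^ 2 / 6 - 153 / 800) * π ^ 2 := by nlinarith
      gcongr
    linarith [exp_pos (-(1229 / 10000 / s))]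
  have h6 := integral_pow_six_mul_exp_neg_mul_sq_le hb hpi.le
  have h2 := integral_sq_mul_exp_neg_mul_sq_le hb hpi.le
  have hCZ : 7796 / 10000 * Y ≤ √(π / (π ^ 2 / 6 / s ^ 3)) :=
    le_sqrt_pi_div hs (by positivity) (by norm_num) (by linarith)
  have hCb : √(π / (153 / 112 / s ^ 3)) ≤ 8557 / 10000 * Y :=
    sqrt_pi_div_le hs (by norm_num) (by norm_num) (by norm_num)
  have hC₁ : √(π / (153 / 800 / s ^ 3)) ≤ 2287 / 1000 * Y :=
    sqrt_pi_div_le hs (by norm_num) (by norm_num) (by norm_num)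
  have h6' : (π ^ 2 / 6 / s ^ 4) ^ 2 *
      ∫ t in -π..π, t ^ 6 * exp (-(153 / 112 / s ^ 3 * t ^ 2)) ≤ 1704 / 1000 * (s * Y) := by
    calc _ ≤ (π ^ 2 / 6 / s ^ 4) ^ 2 *
          (15 / (8 * (153 / 112 / s ^ 3) ^ 3) * (8557 / 10000 * Y)) := by
          gcongr
          exact h6.trans (by gcongr)
      _ ≤ (1.645 / s ^ 4) ^ 2 * (15 / (8 * (153 / 112 / s ^ 3) ^ 3) * (8557 / 10000 * Y)) := by
          gcongr
      _ = 1.645 ^ 2 * (15 / (8 * (153 / 112) ^ 3) * (8557 / 10000)) * (s * Y) := by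
          field_simp
      _ ≤ _ := by
          gcongr
          norm_num
  have h2' : (49 / 20 / s) ^ 2 *
      ∫ t in -π..π, t ^ 2 * exp (-(153 / 112 / s ^ 3 * t ^ 2)) ≤ 1881 / 1000 * (s * Y) := by
    calc _ ≤ (49 / 20 / s) ^ 2 * (1 / (2 * (153 / 112 / s ^ 3)) * (8557 / 10000 * Y)) := by
          gcongr
          exact h2.trans (by gcongr)
      _ = (49 / 20) ^ 2 * (1 / (2 * (153 / 112)) * (8557 / 10000)) * (s * Y) := by
          field_simp
      _ ≤ _ := by
          gcongr
          norm_num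
  have h1' : 2 * κ₁ * √(π / (153 / 800 / s ^ 3)) ≤ 65 / 100000 * Y := by
    calc _ ≤ 2 * (14 / 100000) * (2287 / 1000 * Y) := by gcongr
      _ ≤ _ := by nlinarith
  have hk2 : (π - -π) * (2 * κ₂) ≤ 1 / 10000 * Y := by
    have hpi4 := pi_lt_four
    have hs5 : s ^ 5 ≤ s ^ 2 := pow_le_pow_of_le_one hs.le (by linarith) (by norm_num)
    have h00 : 0 ≤ κ₂ := (exp_pos _).le
    nlinarith
  have hsY : s * Y ≤ 1 / 78 * Y := by gcongr
  linarith

theorem integral_exp_genRe_sub_mul_abs_sin_le {s : ℝ} (hs : 0 < s) (hs' : s ≤ 1 / 78) :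
    ∫ t in -π..π, exp (genRe s t - genRe s 0) * |sin t| ≤ 735 / 1000 * s ^ 3 := by
  have hre := continuous_genRe hs
  have hpi := pi_pos
  set κ₁ := exp (-(1229 / 10000 / s)) with hκ₁
  set κ₂ := exp (-(49 / 100 / s)) with hκ₂
  have hκ₁' : κ₁ ≤ 14 / 100000 := exp_neg_minor_arc_le hs hs'
  have hκ₂' : κ₂ ≤ 1 / 1000000 * s ^ 5 := exp_neg_far_arc_le hs hs'
  have hκ₁0 : 0 < κ₁ := exp_pos _
  have hκ₂0 : 0 < κ₂ := exp_pos _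
  have hb : (0 : ℝ) < 153 / 112 / s ^ 3 := by positivity
  have hb₁ : (0 : ℝ) < 153 / 800 / s ^ 3 := by positivity
  have hmono := intervalIntegral.integral_mono_on (a := -π) (b := π)
    (μ := MeasureTheory.volume) (by linarith)
    ((by fun_prop : Continuous fun t : ℝ =>
      exp (genRe s t - genRe s 0) * |sin t|).intervalIntegrable _ _)
    ((by fun_prop : Continuous fun t : ℝ => |t| * exp (-(153 / 112 / s ^ 3 * t ^ 2)) +
      κ₁ * (|t| * exp (-(153 / 800 / s ^ 3 * t ^ 2))) + κ₂ * π).intervalIntegrable _ _)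
    (fun t ht => by
      have ht' := abs_le.2 ht
      have h := exp_genRe_sub_le_arcMajorant hs hs' ht'
      calc _ ≤ arcMajorant s t * |t| := by
            exact mul_le_mul h abs_sin_le_abs (abs_nonneg _) ((exp_pos _).le.trans h)
        _ = |t| * exp (-(153 / 112 / s ^ 3 * t ^ 2)) +
          κ₁ * (|t| * exp (-(153 / 800 / s ^ 3 * t ^ 2))) + κ₂ * |t| := by
            rw [arcMajorant]; ring
        _ ≤ _ := by gcongr)
  refine hmono.trans ?_
  rw [intervalIntegral.integral_add (by apply Continuous.intervalIntegrable; fun_prop)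
      (by apply Continuous.intervalIntegrable; fun_prop),
    intervalIntegral.integral_add (by apply Continuous.intervalIntegrable; fun_prop)
      (by apply Continuous.intervalIntegrable; fun_prop),
    intervalIntegral.integral_const_mul, intervalIntegral.integral_const, smul_eq_mul]
  have h := integral_abs_mul_exp_neg_mul_sq_le hb hpi.le
  have h' : 1 / (153 / 112 / s ^ 3) = 112 / 153 * s ^ 3 := by field_simp
  have h₁ : κ₁ * ∫ t in -π..π, |t| * exp (-(153 / 800 / s ^ 3 * t ^ 2)) ≤
      8 / 10000 * s ^ 3 := by
    calc _ ≤ κ₁ * (1 / (153 / 800 / s ^ 3)) := by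
          gcongr
          exact integral_abs_mul_exp_neg_mul_sq_le hb₁ hpi.le
      _ ≤ 14 / 100000 * (1 / (153 / 800 / s ^ 3)) := by gcongr
      _ = 14 / 100000 * (800 / 153) * s ^ 3 := by field_simp
      _ ≤ _ := by
          gcongr
          norm_num
  have hk2 : (π - -π) * (κ₂ * π) ≤ 1 / 10000 * s ^ 3 := by
    have hs5 : s ^ 5 ≤ s ^ 3 := pow_le_pow_of_le_one hs.le (by linarith) (by norm_num)
    have hpi2 : π * π ≤ 4 * 4 := by gcongr <;> exact pi_lt_four.le
    nlinarith
  have hs3 : 0 < s ^ 3 := by positivity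
  linarith

theorem integral_exp_genRe_sub_mul_one_sub_cos_le {s : ℝ} (hs : 0 < s) (hs' : s ≤ 1 / 78) :
    ∫ t in -π..π, exp (genRe s t - genRe s 0) * (1 - cos t) ≤
      158 / 1000 * s ^ 3 * √(π * s ^ 3) := by
  have hre := continuous_genRe hs
  have hpi := pi_pos
  set κ₁ := exp (-(1229 / 10000 / s)) with hκ₁
  set κ₂ := exp (-(49 / 100 / s)) with hκ₂
  set Y := √(π * s ^ 3) with hY
  have hκ₁' : κ₁ ≤ 14 / 100000 := exp_neg_minor_arc_le hs hs'
  have hκ₂' : κ₂ ≤ 1 / 1000000 * s ^ 5 := exp_neg_far_arc_le hs hs'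
  have hκ₁0 : 0 < κ₁ := exp_pos _
  have hκ₂0 : 0 < κ₂ := exp_pos _
  have hYs : s ^ 2 ≤ Y := sq_le_sqrt_pi_mul hs hs'
  have hY0 : 0 < Y := lt_of_lt_of_le (by positivity) hYs
  have hb : (0 : ℝ) < 153 / 112 / s ^ 3 := by positivity
  have hb₁ : (0 : ℝ) < 153 / 800 / s ^ 3 := by positivity
  have hmono := intervalIntegral.integral_mono_on (a := -π) (b := π)
    (μ := MeasureTheory.volume) (by linarith)
    ((by fun_prop : Continuous fun t : ℝ =>
      exp (genRe s t - genRe s 0) * (1 - cos t)).intervalIntegrable _ _)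
    ((by fun_prop : Continuous fun t : ℝ =>
      1 / 2 * (t ^ 2 * exp (-(153 / 112 / s ^ 3 * t ^ 2))) +
      1 / 2 * κ₁ * (t ^ 2 * exp (-(153 / 800 / s ^ 3 * t ^ 2))) +
      1 / 2 * κ₂ * π ^ 2).intervalIntegrable _ _)
    (fun t ht => by
      have ht' := abs_le.2 ht
      have h := exp_genRe_sub_le_arcMajorant hs hs' ht'
      have hc := one_sub_sq_div_two_le_cos (x := t)
      have hc' : 1 - cos t ≤ t ^ 2 / 2 := by linarith
      have htpi : t ^ 2 ≤ π ^ 2 := by rwa [sq_le_sq, abs_of_pos hpi]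
      calc _ ≤ arcMajorant s t * (t ^ 2 / 2) := by
            refine mul_le_mul h hc' (by linarith [cos_le_one t]) ((exp_pos _).le.trans h)
        _ = 1 / 2 * (t ^ 2 * exp (-(153 / 112 / s ^ 3 * t ^ 2))) +
          1 / 2 * κ₁ * (t ^ 2 * exp (-(153 / 800 / s ^ 3 * t ^ 2))) + 1 / 2 * κ₂ * t ^ 2 := by
            rw [arcMajorant]; ring
        _ ≤ _ := by gcongr)
  refine hmono.trans ?_
  rw [intervalIntegral.integral_add (by apply Continuous.intervalIntegrable; fun_prop)
      (by apply Continuous.intervalIntegrable; fun_prop),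
    intervalIntegral.integral_add (by apply Continuous.intervalIntegrable; fun_prop)
      (by apply Continuous.intervalIntegrable; fun_prop),
    intervalIntegral.integral_const_mul, intervalIntegral.integral_const_mul,
    intervalIntegral.integral_const, smul_eq_mul]
  have hCb : √(π / (153 / 112 / s ^ 3)) ≤ 8557 / 10000 * Y :=
    sqrt_pi_div_le hs (by norm_num) (by norm_num) (by norm_num)
  have hC₁ : √(π / (153 / 800 / s ^ 3)) ≤ 2287 / 1000 * Y :=
    sqrt_pi_div_le hs (by norm_num) (by norm_num) (by norm_num)
  have h : 1 / 2 * ∫ t in -π..π, t ^ 2 * exp (-(153 / 112 / s ^ 3 * t ^ 2)) ≤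
      1567 / 10000 * (s ^ 3 * Y) := by
    calc _ ≤ 1 / 2 * (1 / (2 * (153 / 112 / s ^ 3)) * (8557 / 10000 * Y)) := by
          gcongr
          exact (integral_sq_mul_exp_neg_mul_sq_le hb hpi.le).trans (by gcongr)
      _ = 1 / 2 * (1 / (2 * (153 / 112)) * (8557 / 10000)) * (s ^ 3 * Y) := by field_simp
      _ ≤ _ := by
          gcongr
          norm_num
  have h₁ : 1 / 2 * κ₁ * ∫ t in -π..π, t ^ 2 * exp (-(153 / 800 / s ^ 3 * t ^ 2)) ≤
      5 / 10000 * (s ^ 3 * Y) := by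
    calc _ ≤ 1 / 2 * κ₁ * (1 / (2 * (153 / 800 / s ^ 3)) * (2287 / 1000 * Y)) := by
          gcongr
          exact (integral_sq_mul_exp_neg_mul_sq_le hb₁ hpi.le).trans (by gcongr)
      _ ≤ 1 / 2 * (14 / 100000) * (1 / (2 * (153 / 800 / s ^ 3)) * (2287 / 1000 * Y)) := by
          gcongr
      _ = 1 / 2 * (14 / 100000) * (1 / (2 * (153 / 800)) * (2287 / 1000)) * (s ^ 3 * Y) := by
          field_simp
      _ ≤ _ := by
          gcongr
          norm_num
  have hk2 : (π - -π) * (1 / 2 * κ₂ * π ^ 2) ≤ 1 / 10000 * (s ^ 3 * Y) := by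
    have hs5 : s ^ 5 ≤ s ^ 3 * Y := by
      calc s ^ 5 = s ^ 3 * s ^ 2 := by ring
        _ ≤ _ := by gcongr
    have hpi3 : π ^ 3 ≤ 4 ^ 3 := by gcongr; exact pi_lt_four.le
    nlinarith
  have hs3 : 0 < s ^ 3 * Y := by positivity
  linarith

end ArcEstimates

section Asymptotics

/-- The coefficient integral over the circle of radius `exp (-s)`, normalised by the value of the
generating function at the positive real point. -/
noncomputable def arcIntegral (s k : ℝ) : ℝ :=
  ∫ t in -π..π, exp (genRe s t - genRe s 0) * cos (genIm s t - k * t)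

theorem p_eq_exp_mul_arcIntegral {s : ℝ} (hs : 0 < s) (k : ℕ) :
    p k = exp (k * s + genRe s 0) / (2 * π) * arcIntegral s k := by
  have h := integral_exp_genRe_mul_cos hs k
  have h1 : arcIntegral s k = exp (-genRe s 0) * (2 * π * (p k * exp (-(k * s)))) := by
    rw [← h, ← intervalIntegral.integral_const_mul, arcIntegral]
    refine intervalIntegral.integral_congr fun t _ => ?_
    simp only [sub_eq_add_neg, exp_add]
    ring
  rw [h1, exp_add, exp_neg, exp_neg]
  have := pi_pos
  field_simp

theorem two_mul_arcIntegral_sub_le {s : ℝ} (hs : 0 < s) (k : ℝ) :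
    2 * (arcIntegral s k - ∫ t in -π..π, exp (genRe s t - genRe s 0) * (1 - cos t)) ≤
      arcIntegral s (k + 1) + arcIntegral s (k - 1) := by
  have hre := continuous_genRe hs
  have him := continuous_genIm hs
  have hpi := pi_pos
  unfold arcIntegral
  rw [← intervalIntegral.integral_sub (by apply Continuous.intervalIntegrable; fun_prop)
      (by apply Continuous.intervalIntegrable; fun_prop),
    ← intervalIntegral.integral_add (by apply Continuous.intervalIntegrable; fun_prop)
      (by apply Continuous.intervalIntegrable; fun_prop),
    ← intervalIntegral.integral_const_mul]
  refine intervalIntegral.integral_mono_on (by linarith)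
    (by apply Continuous.intervalIntegrable; fun_prop)
    (by apply Continuous.intervalIntegrable; fun_prop) fun t _ => ?_
  have h1 : genIm s t - (k + 1) * t = (genIm s t - k * t) - t := by ring
  have h2 : genIm s t - (k - 1) * t = (genIm s t - k * t) + t := by ring
  rw [h1, h2, cos_sub (genIm s t - k * t), cos_add]
  have h3 := mul_nonneg (mul_nonneg (exp_pos (genRe s t - genRe s 0)).le
    (sub_nonneg.2 (cos_le_one t))) (sub_nonneg.2 (cos_le_one (genIm s t - k * t)))
  linarith

theorem abs_arcIntegral_sub_le {s : ℝ} (hs : 0 < s) (k : ℝ) :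
    |arcIntegral s (k + 1) - arcIntegral s (k - 1)| ≤
      2 * ∫ t in -π..π, exp (genRe s t - genRe s 0) * |sin t| := by
  have hre := continuous_genRe hs
  have him := continuous_genIm hs
  have hpi := pi_pos
  unfold arcIntegral
  rw [← intervalIntegral.integral_sub (by apply Continuous.intervalIntegrable; fun_prop)
      (by apply Continuous.intervalIntegrable; fun_prop),
    ← intervalIntegral.integral_const_mul]
  refine (intervalIntegral.abs_integral_le_integral_abs (by linarith)).trans ?_
  refine intervalIntegral.integral_mono_on (by linarith)
    (by apply Continuous.intervalIntegrable; fun_prop)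
    (by apply Continuous.intervalIntegrable; fun_prop) fun t _ => ?_
  have h1 : genIm s t - (k + 1) * t = (genIm s t - k * t) - t := by ring
  have h2 : genIm s t - (k - 1) * t = (genIm s t - k * t) + t := by ring
  rw [h1, h2, cos_sub (genIm s t - k * t), cos_add]
  have h3 : exp (genRe s t - genRe s 0) *
      (cos (genIm s t - k * t) * cos t + sin (genIm s t - k * t) * sin t) -
      exp (genRe s t - genRe s 0) *
      (cos (genIm s t - k * t) * cos t - sin (genIm s t - k * t) * sin t) =
      2 * exp (genRe s t - genRe s 0) * sin t * sin (genIm s t - k * t) := by ring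
  rw [h3, abs_mul, abs_mul, abs_of_pos (by positivity), ← mul_assoc]
  exact mul_le_of_le_one_right (by positivity) (abs_sin_le_one _)

theorem arcIntegral_bounds {s k : ℝ} (hs : 0 < s) (hs' : s ≤ 1 / 78) (hk : π ^ 2 / 6 / s ^ 2 = k) :
    73 / 100 * s ^ 2 ≤ arcIntegral s k ∧
    (1 - 645 / 10000 * s) * arcIntegral s k ≤ arcIntegral s (k - 1) ∧
    (1 - 756 / 1000 * s ^ 3) * arcIntegral s k ^ 2 ≤
      arcIntegral s (k - 1) * arcIntegral s (k + 1) := by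
  have hD : 73 / 100 * √(π * s ^ 3) ≤ arcIntegral s k := by
    rw [← hk]; exact le_integral_exp_genRe_sub_mul_cos hs hs'
  have hadd := two_mul_arcIntegral_sub_le hs k
  have hsub := abs_arcIntegral_sub_le hs k
  have hJ := integral_exp_genRe_sub_mul_one_sub_cos_le hs hs'
  have hB := integral_exp_genRe_sub_mul_abs_sin_le hs hs'
  have hYs := sq_le_sqrt_pi_mul hs hs'
  have hYsq : √(π * s ^ 3) ^ 2 = π * s ^ 3 := sq_sqrt (by positivity)
  have hB0 : 0 ≤ ∫ t in -π..π, exp (genRe s t - genRe s 0) * |sin t| :=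
    intervalIntegral.integral_nonneg (by linarith [pi_pos]) fun t _ => by positivity
  set Y := √(π * s ^ 3)
  set D := arcIntegral s k
  set J := ∫ t in -π..π, exp (genRe s t - genRe s 0) * (1 - cos t)
  set B := ∫ t in -π..π, exp (genRe s t - genRe s 0) * |sin t|
  set P := arcIntegral s (k + 1)
  set Q := arcIntegral s (k - 1)
  have hs2 : 0 < s ^ 2 := by positivity
  have hs3 : 0 < s ^ 3 := by positivity
  have hY0 : 0 < Y := hs2.trans_le hYs
  have hpi := pi_gt_d4
  have hJD : J ≤ 2165 / 10000 * s ^ 3 * D := by nlinarith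
  have hBD : B ^ 2 ≤ 323 / 1000 * s ^ 3 * D ^ 2 := by
    have h1 : B ^ 2 ≤ (735 / 1000 * s ^ 3) ^ 2 := by gcongr
    have h2 : (73 / 100 * Y) ^ 2 ≤ D ^ 2 := by gcongr
    have h3 : (735 / 1000 * s ^ 3) ^ 2 ≤ 323 / 1000 * s ^ 3 * (73 / 100 * Y) ^ 2 := by
      rw [mul_pow (73 / 100) Y, hYsq]
      nlinarith [mul_pos hs3 hs3]
    calc _ ≤ _ := h1
      _ ≤ _ := h3
      _ ≤ _ := by gcongr
  have hD0 : 0 < D := lt_of_lt_of_le (by positivity) hD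
  have hss : s ^ 2 ≤ 1 / 78 ^ 2 := by
    calc s ^ 2 ≤ (1 / 78) ^ 2 := by gcongr
      _ = _ := by norm_num
  have hs31 : s ^ 3 ≤ 1 / 78 ^ 2 * s := by nlinarith
  have hBD1 : B ≤ 6436 / 100000 * s * D := by
    refine (pow_le_pow_iff_left₀ hB0 (by positivity) two_ne_zero).1 (hBD.trans ?_)
    rw [mul_pow, mul_pow]
    refine mul_le_mul_of_nonneg_right ?_ (sq_nonneg D)
    nlinarith
  have hsub' := abs_le.1 hsub
  have hDJ : 0 ≤ D - J := by nlinarith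
  refine ⟨le_trans (by gcongr) hD, ?_, ?_⟩
  · nlinarith
  · have h1 : (D - J) ^ 2 ≤ ((P + Q) / 2) ^ 2 := by
      gcongr
      linarith
    have h2 : ((P - Q) / 2) ^ 2 ≤ B ^ 2 := by
      rw [sq_le_sq, abs_of_nonneg hB0, abs_div, abs_two]
      linarith
    nlinarith [sq_nonneg J]

theorem log_add_log_lt {s : ℝ} (hs : 0 < s) (hs' : s ≤ 1 / 78) :
    log (64 * (1 / s) ^ 4) + 1 / 2 * log (1 / s) + 11294 / 10000 / s < π ^ 2 / 6 / s := by
  have hZ := lt_pi_sq_div_six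
  have h78 : 78 ≤ 1 / s := by rw [le_div_iff₀ hs]; linarith
  have h64 : log 64 = 6 * log 2 := by
    rw [show (64 : ℝ) = 2 ^ 6 by norm_num, log_pow]; norm_num
  have h128 : log 128 = 7 * log 2 := by
    rw [show (128 : ℝ) = 2 ^ 7 by norm_num, log_pow]; norm_num
  have h2 := log_two_lt_d9
  have hlog : log (1 / s) ≤ 1 / s / 128 - 1 + log 128 := by
    have h := log_le_sub_one_of_pos (show 0 < 1 / s / 128 by positivity)
    rw [log_div (by positivity) (by norm_num)] at h
    linarith
  rw [log_mul (by norm_num) (by positivity), log_pow, h64]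
  have h3 : 11294 / 10000 / s = 11294 / 10000 * (1 / s) := by ring
  have h4 : π ^ 2 / 6 / s = π ^ 2 / 6 * (1 / s) := by ring
  rw [h3, h4]
  push_cast
  nlinarith

theorem le_genRe_zero_of_le {s : ℝ} (hs : 0 < s) (hs' : s ≤ 1 / 78) :
    π ^ 2 / 6 / s - 1 - 1 / 2 * log (4 * (1 / s)) ≤ genRe s 0 := by
  have h78 : 78 ≤ 1 / s := by rw [le_div_iff₀ hs]; linarith
  set M := ⌈2 * (1 / s)⌉₊ with hM
  have h1 : 2 * (1 / s) ≤ M := Nat.le_ceil _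
  have h2 : (M : ℝ) < 2 * (1 / s) + 1 := Nat.ceil_lt_add_one (by positivity)
  have hM0 : (0 : ℝ) < M := by linarith
  have hM1 : 1 ≤ M := by exact_mod_cast hM0
  have h := le_genRe_zero hs hM1
  have h3 : log M ≤ log (4 * (1 / s)) := log_le_log hM0 (by linarith)
  have h4 : 1 / (M : ℝ) / s ≤ 1 / 2 := by
    calc 1 / (M : ℝ) / s ≤ 1 / (2 * (1 / s)) / s := by gcongr
      _ = _ := by field_simp
  rw [sub_div] at h
  linarith

theorem log_div_le_of_mul_le {x y d e : ℝ} (hx : 0 < x) (hy : 0 < y) (he : 0 < 1 - e)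
    (h : (1 - e) * x ≤ y) (hde : 1 ≤ (1 + d) * (1 - e)) : log (x / y) ≤ d := by
  have hd : 0 < 1 + d := pos_of_mul_pos_left (one_pos.trans_le hde) he.le
  have h1 : x / y ≤ 1 + d := by
    rw [div_le_iff₀ hy]
    calc x ≤ (1 + d) * (1 - e) * x := le_mul_of_one_le_left hx.le hde
      _ = (1 + d) * ((1 - e) * x) := mul_assoc _ _ _
      _ ≤ _ := mul_le_mul_of_nonneg_left h hd.le
  linarith [log_le_sub_one_of_pos (div_pos hx hy)]

set_option maxHeartbeats 1000000 in
theorem sq_r_lt_of_le {n : ℕ} (hn : 10048 ≤ n) : r n ^ 2 < r (n - 1) * r (n + 1) := by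
  have hpi := pi_pos
  have hZ := pi_sq_div_six_lt
  have hZ' := lt_pi_sq_div_six
  have hN : (10048 : ℝ) ≤ n := by exact_mod_cast hn
  have hN0 : (0 : ℝ) < n := by linarith
  have hN1 : (0 : ℝ) < n - 1 := by linarith
  obtain ⟨s, hs, hsn⟩ : ∃ s : ℝ, 0 < s ∧ s ^ 2 = π ^ 2 / 6 / n :=
    ⟨√(π ^ 2 / 6 / n), by positivity, sq_sqrt (by positivity)⟩
  have hk : π ^ 2 / 6 / s ^ 2 = n := by rw [hsn]; field_simp
  have hs' : s ≤ 1 / 78 := by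
    refine (pow_le_pow_iff_left₀ hs.le (by norm_num) two_ne_zero).1 ?_
    rw [hsn, div_le_iff₀ hN0]
    linarith
  obtain ⟨hD, hx, hη⟩ := arcIntegral_bounds hs hs' hk
  have hcast : ((n - 1 : ℕ) : ℝ) = n - 1 := by
    rw [Nat.cast_sub (by omega)]; simp
  have hpa := p_eq_exp_mul_arcIntegral hs (n - 1)
  have hpb := p_eq_exp_mul_arcIntegral hs n
  have hpc := p_eq_exp_mul_arcIntegral hs (n + 1)
  rw [hcast] at hpa
  rw [Nat.cast_add, Nat.cast_one] at hpc
  have hs3 : s ^ 3 ≤ 1 / 78 ^ 3 := by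
    calc s ^ 3 ≤ (1 / 78) ^ 3 := by gcongr
      _ = _ := by norm_num
  have hD0 : 0 < arcIntegral s n := lt_of_lt_of_le (by positivity) hD
  have hx0 : 0 < 1 - 645 / 10000 * s := by linarith
  have hη0 : 0 < 1 - 756 / 1000 * s ^ 3 := by linarith
  have hA0 : 0 < arcIntegral s (n - 1) := lt_of_lt_of_le (mul_pos hx0 hD0) hx
  have hC0 : 0 < arcIntegral s (n + 1) :=
    pos_of_mul_pos_right (lt_of_lt_of_le (mul_pos hη0 (pow_pos hD0 2)) hη) hA0.le
  set A := arcIntegral s (n - 1)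
  set D := arcIntegral s n
  set C := arcIntegral s (n + 1)
  set G := genRe s 0
  refine sq_r_lt_of_log_lt (by omega) (a := p (n - 1) / (n - 1)) (b := p n / n)
    (c := p (n + 1) / (n + 1)) (div_pos (p_pos _) hN1) (div_pos (p_pos _) hN0)
    (div_pos (p_pos _) (by positivity)) (by field_simp) (by field_simp) (by field_simp) ?_
  have hba : p n / n / (p (n - 1) / (n - 1)) = exp s * (D / A) * ((n - 1) / n) := by
    have he : exp (n * s + G) = exp s * exp ((n - 1) * s + G) := by
      rw [← exp_add]; congr 1; ring
    rw [hpa, hpb, he]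
    field_simp
  have hbac : (p n / n) ^ 2 / (p (n - 1) / (n - 1) * (p (n + 1) / (n + 1))) =
      D ^ 2 / (A * C) * ((n - 1) * (n + 1) / (n : ℝ) ^ 2) := by
    have he : exp (n * s + G) ^ 2 = exp ((n - 1) * s + G) * exp ((n + 1) * s + G) := by
      rw [← exp_add, ← exp_nat_mul]; congr 1; push_cast; ring
    rw [hpa, hpb, hpc, div_pow, mul_pow, div_pow, he]
    field_simp
  have hlogb : log (p n / n) = n * s + G - log (2 * π) + log D - log n := by
    rw [hpb, log_div (by positivity) hN0.ne', log_mul (by positivity) hD0.ne',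
      log_div (by positivity) (by positivity), log_exp]
  have hL1 : log (D / A) ≤ 6456 / 100000 * s := log_div_le_of_mul_le hD0 hA0 hx0 hx (by nlinarith)
  have hL2 : log (D ^ 2 / (A * C)) ≤ 7561 / 10000 * s ^ 3 :=
    log_div_le_of_mul_le (pow_pos hD0 2) (mul_pos hA0 hC0) hη0 hη (by nlinarith [pow_pos hs 3])
  have hL3 : log (((n : ℝ) - 1) / n) ≤ -(1 / n) := by
    have h := log_le_sub_one_of_pos (div_pos hN1 hN0)
    have : ((n : ℝ) - 1) / n - 1 = -(1 / n) := by field_simp; ring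
    linarith
  have hL4 : log (((n : ℝ) - 1) * (n + 1) / (n : ℝ) ^ 2) ≤ 0 := by
    apply log_nonpos (by positivity)
    rw [div_le_one (by positivity)]
    linarith
  rw [hba, hbac, hlogb, log_mul (by positivity) (by positivity), log_mul (by positivity)
    (by positivity), log_exp, log_mul (x := D ^ 2 / (A * C)) (by positivity) (by positivity)]
  have hT1 : n * log (D / A) ≤ 1063 / 10000 / s := by
    calc n * log (D / A) ≤ n * (6456 / 100000 * s) := by gcongr
      _ = π ^ 2 / 6 * (6456 / 100000) / s := by rw [← hk]; field_simp
      _ ≤ _ := by gcongr; linarith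
  have hT2 : n * (n - 1) * log (D ^ 2 / (A * C)) ≤ 2 * (10231 / 10000 / s) := by
    calc n * (n - 1) * log (D ^ 2 / (A * C)) ≤ n * (n - 1) * (7561 / 10000 * s ^ 3) := by gcongr
      _ ≤ n * n * (7561 / 10000 * s ^ 3) := by gcongr; linarith
      _ = (π ^ 2 / 6) ^ 2 * (7561 / 10000) / s := by rw [← hk]; field_simp
      _ ≤ 2 * (10231 / 10000) / s := div_le_div_of_nonneg_right (by nlinarith) hs.le
      _ = _ := by ring
  have hT3 : n * log (((n : ℝ) - 1) / n) ≤ -1 := by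
    calc n * log (((n : ℝ) - 1) / n) ≤ n * -(1 / n) := by gcongr
      _ = _ := by field_simp
  have hT4 : n * (n - 1) * log (((n : ℝ) - 1) * (n + 1) / (n : ℝ) ^ 2) ≤ 0 :=
    mul_nonpos_of_nonneg_of_nonpos (by positivity) hL4
  have hG := le_genRe_zero_of_le hs hs'
  have hmain := log_add_log_lt hs hs'
  have hlogs : log (2 * π) + log n - log D + 1 / 2 * log 4 ≤ log (64 * (1 / s) ^ 4) := by
    have h4 : 1 / 2 * log 4 = log 2 := by
      rw [show (4 : ℝ) = 2 ^ 2 by norm_num, log_pow]; push_cast; ring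
    rw [h4, ← log_mul (by positivity) hN0.ne', ← log_div (by positivity) hD0.ne',
      ← log_mul (by positivity) two_ne_zero]
    apply log_le_log (by positivity)
    calc 2 * π * n / D * 2 ≤ 2 * 3.1416 * n / (73 / 100 * s ^ 2) * 2 := by
          gcongr
          exact pi_lt_d4.le
      _ = 2 * 3.1416 * (π ^ 2 / 6) / (73 / 100) * 2 * (1 / s) ^ 4 := by rw [← hk]; field_simp
      _ ≤ _ := by
          gcongr
          linarith
  have h5 : log (4 * (1 / s)) = log 4 + log (1 / s) := log_mul (by norm_num) (by positivity)
  rw [h5] at hG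
  have h6 : 11294 / 10000 / s = 1063 / 10000 / s + 10231 / 10000 / s := by ring
  linarith

end Asymptotics

theorem r_strictly_log_convex (n : ℕ) (hn : 61 ≤ n) :
    r n ^ 2 < r (n - 1) * r (n + 1) := by
  rcases lt_or_ge n 10048 with h | h
  · exact sq_r_lt_of_lt (fun i hi => card_partition_lt hi) hn h
  · exact sq_r_lt_of_le h
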